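/- arXiv:1710.02512 — 4 statements merged into one kernel-verified Lean document; each statement's English description precedes it below -/
import Mathlib

section
/- Let q be an even prime power, let n ≥ 3, and let K be a complete k-cap in PG(n, q). Then for every point Q of PG(n, q) not in K, the number σ₁(Q) of tangent lines of K through Q satisfies σ₁(Q) ≤ t, where t = q^{n−1} + q^{n−2} + ⋯ + q + 2 − k is the number of tangent lines of K through each point of K. -/
open Module

/-- Points of the projective space `PG(n, q)` over the field `F` (with `q = |F|`). -/
abbrev PGPoint (F : Type*) [Field F] (n : ℕ) := Projectivization F (Fin (n + 1) → F)

/-- The set of projective points lying in the projective subspace determined by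
a linear subspace `W`. -/
def ptsIn {F : Type*} [Field F] {n : ℕ} (W : Submodule F (Fin (n + 1) → F)) :
    Set (PGPoint F n) := {P | P.submodule ≤ W}

/-- Three points of `PG(n, q)` are collinear if they lie on a common line. -/
def Coll3 {F : Type*} [Field F] {n : ℕ} (P₁ P₂ P₃ : PGPoint F n) : Prop :=
  Module.finrank F ↥(P₁.submodule ⊔ P₂.submodule ⊔ P₃.submodule) ≤ 2

/-- A cap (a plane arc when `n = 2`): a set of points no three of which are collinear. -/
def IsCap {F : Type*} [Field F] {n : ℕ} (K : Set (PGPoint F n)) : Prop :=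
  ∀ P₁ ∈ K, ∀ P₂ ∈ K, ∀ P₃ ∈ K, P₁ ≠ P₂ → P₁ ≠ P₃ → P₂ ≠ P₃ → ¬ Coll3 P₁ P₂ P₃

/-- A complete cap: a cap that is not contained in a cap with one more point. -/
def IsCompleteCap {F : Type*} [Field F] {n : ℕ} (K : Set (PGPoint F n)) : Prop :=
  IsCap K ∧ ∀ P ∉ K, ¬ IsCap (insert P K)

/-- A tangent line of `K`: a line (2-dimensional linear subspace) meeting `K`
in exactly one point. -/
def IsTangent {F : Type*} [Field F] {n : ℕ} (K : Set (PGPoint F n))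
    (W : Submodule F (Fin (n + 1) → F)) : Prop :=
  Module.finrank F W = 2 ∧ (ptsIn W ∩ K).ncard = 1


namespace CapAux
section planar
variable {F : Type*} [Field F]

/-- The determinant bracket on `F^3`. -/
def br (x y z : Fin 3 → F) : F :=
  x 0 * (y 1 * z 2 - y 2 * z 1) - x 1 * (y 0 * z 2 - y 2 * z 0) + x 2 * (y 0 * z 1 - y 1 * z 0)

lemma br_self12 (x y : Fin 3 → F) : br x x y = 0 := by unfold br; ring
lemma br_self13 (x y : Fin 3 → F) : br x y x = 0 := by unfold br; ring
lemma br_self23 (x y : Fin 3 → F) : br x y y = 0 := by unfold br; ring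
lemma br_swap23 [CharP F 2] (x y z : Fin 3 → F) : br x y z = br x z y := by
  rw [← CharTwo.neg_eq (br x z y)]; unfold br; ring
lemma br_swap12 [CharP F 2] (x y z : Fin 3 → F) : br x y z = br y x z := by
  rw [← CharTwo.neg_eq (br y x z)]; unfold br; ring
lemma br_three [CharP F 2] (x w p r y : Fin 3 → F) :
    br x p r * br x w y = br x w r * br x p y + br x w p * br x r y := by
  rw [← CharTwo.sub_eq_add]; unfold br; ring

/-- Interpolation for products of linear forms. -/
lemma lag [CharP F 2] {V ι : Type*} [DecidableEq V] [DecidableEq ι] (b : V → V → F)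
    (hs : ∀ x y, b x y = b y x) (h0 : ∀ x, b x x = 0) (L : ι → V → F)
    (h3 : ∀ i p r y, b p r * L i y = L i r * b p y + L i p * b r y) (D : Finset ι) :
    ∀ M : Finset V, M.card = D.card + 2 → (∀ x ∈ M, ∀ y ∈ M, x ≠ y → b x y ≠ 0) →
    ∑ y ∈ M, (∏ i ∈ D, L i y) * ∏ z ∈ M.erase y, (b y z)⁻¹ = 0 := by
  induction D using Finset.induction_on with
  | empty =>
    intro M hM _
    obtain ⟨x, y, hxy, rfl⟩ := Finset.card_eq_two.1 (by simpa using hM)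
    rw [Finset.sum_pair hxy]
    have e1 : ({x, y} : Finset V).erase x = {y} := by
      ext z; simp only [Finset.mem_erase, Finset.mem_insert, Finset.mem_singleton]; grind
    have e2 : ({x, y} : Finset V).erase y = {x} := by
      ext z; simp only [Finset.mem_erase, Finset.mem_insert, Finset.mem_singleton]; grind
    rw [e1, e2]
    simp [hs y x, CharTwo.add_self_eq_zero]
  | insert i D hi ih =>
    intro M hM hne
    rw [Finset.card_insert_of_notMem hi] at hM
    have key : ∀ p ∈ M, ∑ y ∈ M, (∏ i ∈ D, L i y) * (b p y * ∏ z ∈ M.erase y, (b y z)⁻¹) = 0 := by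
      intro p hp
      rw [← Finset.sum_erase_add _ _ hp, h0, zero_mul, mul_zero, add_zero]
      rw [← ih (M.erase p) (by rw [Finset.card_erase_of_mem hp]; omega)
        (fun x hx y hy => hne x (Finset.mem_of_mem_erase hx) y (Finset.mem_of_mem_erase hy))]
      refine Finset.sum_congr rfl fun y hy => ?_
      have hyp := Finset.ne_of_mem_erase hy
      have hyM := Finset.mem_of_mem_erase hy
      congr 1
      have : p ∈ M.erase y := Finset.mem_erase.2 ⟨hyp.symm, hp⟩
      rw [← Finset.mul_prod_erase _ _ this, ← mul_assoc, hs p y,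
        mul_inv_cancel₀ (hne y hyM p hp hyp), one_mul, Finset.erase_right_comm]
    obtain ⟨p, hp, r, hr, hpr⟩ := Finset.one_lt_card.1 (show 1 < M.card by omega)
    have : b p r * ∑ y ∈ M, (∏ i ∈ insert i D, L i y) * ∏ z ∈ M.erase y, (b y z)⁻¹
      = L i r * ∑ y ∈ M, (∏ i ∈ D, L i y) * (b p y * ∏ z ∈ M.erase y, (b y z)⁻¹)
      + L i p * ∑ y ∈ M, (∏ i ∈ D, L i y) * (b r y * ∏ z ∈ M.erase y, (b y z)⁻¹) := by
      rw [Finset.mul_sum, Finset.mul_sum, Finset.mul_sum, ← Finset.sum_add_distrib]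
      refine Finset.sum_congr rfl fun y _ => ?_
      rw [Finset.prod_insert hi]
      linear_combination ((∏ i ∈ D, L i y) * ∏ z ∈ M.erase y, (b y z)⁻¹) * h3 i p r y
    rw [key p hp, key r hr, mul_zero, mul_zero, add_zero] at this
    exact (mul_eq_zero.1 this).resolve_left (hne p hp r hr hpr)

/-- A symmetric off-diagonal double sum vanishes in characteristic two. -/
lemma sum_symm [CharP F 2] {V : Type*} [DecidableEq V] (s : V → V → F) (hs : ∀ x y, s x y = s y x)
    (A : Finset V) : ∑ x ∈ A, ∑ y ∈ A.erase x, s x y = 0 := by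
  induction A using Finset.induction_on with
  | empty => simp
  | insert a A ha ih =>
    rw [Finset.sum_insert ha, Finset.erase_insert ha]
    have : ∑ x ∈ A, ∑ y ∈ (insert a A).erase x, s x y
        = ∑ x ∈ A, (s a x + ∑ y ∈ A.erase x, s x y) := by
      refine Finset.sum_congr rfl fun x hx => ?_
      have hax : a ≠ x := fun h => ha (h ▸ hx)
      rw [Finset.erase_insert_of_ne hax, Finset.sum_insert (by simp [ha]), hs x a]
    rw [this, Finset.sum_add_distrib, ih, add_zero, CharTwo.add_self_eq_zero]

variable [Fintype F] [DecidableEq F]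

/-- Existence of the tangent form at a point of an arc. -/
lemma tangent_form [CharP F 2] (K : Finset (Fin 3 → F))
    (hK : ∀ x ∈ K, ∀ y ∈ K, ∀ z ∈ K, x ≠ y → x ≠ z → y ≠ z → br x y z ≠ 0)
    (h3 : 3 ≤ K.card) (x : Fin 3 → F) (hx : x ∈ K) :
    ∃ (D : Finset F) (L : F → (Fin 3 → F) → F), D.card + K.card = Fintype.card F + 2 ∧
      (∀ i p r y, br x p r * L i y = L i r * br x p y + L i p * br x r y) ∧
      (∀ i ∈ D, ∀ y ∈ K, y ≠ x → L i y ≠ 0) ∧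
      (∀ i, L i x = 0) ∧ (∀ i c u d v, L i (c • u + d • v) = c * L i u + d * L i v) ∧
      (∀ v, (∀ y ∈ K, y ≠ x → br x v y ≠ 0) → ∃ i ∈ D, L i v = 0) ∧
      (∃ C : F, C ≠ 0 ∧ ∀ y ∈ K, y ≠ x →
        (∏ i ∈ D, L i y) * ∏ p ∈ (K.erase x).erase y, br x p y = C) := by
  have hc1 : 1 < (K.erase x).card := by rw [Finset.card_erase_of_mem hx]; omega
  obtain ⟨y0, hy0, y1, hy1, h01⟩ := Finset.one_lt_card.1 hc1
  rw [Finset.mem_erase] at hy0 hy1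
  have hbr : ∀ y ∈ K, ∀ z ∈ K, y ≠ x → z ≠ x → y ≠ z → br x y z ≠ 0 :=
    fun y hy z hz a b c => hK x hx y hy z hz a.symm b.symm c
  have hN : br x y0 y1 ≠ 0 := hbr _ hy0.2 _ hy1.2 hy0.1 hy1.1 h01
  set g : (Fin 3 → F) → F := fun p => br x y1 p / br x y0 p with hg
  set D : Finset F := Finset.univ \ ((K.erase x).erase y0).image g with hD
  set L : F → (Fin 3 → F) → F := fun d v => br x y1 v + d * br x y0 v with hL
  have plu : ∀ p r, br x y1 p * br x y0 r + br x y1 r * br x y0 p = br x y0 y1 * br x p r := by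
    intro p r
    have := br_three x y0 p r y1
    rw [br_swap23 x y1 p, br_swap23 x y1 r]
    linear_combination -this
  have hginj : Set.InjOn g (((K.erase x).erase y0 : Finset _) : Set (Fin 3 → F)) := by
    intro p hp r hr hpr
    simp only [Finset.coe_erase, Set.mem_sdiff, Finset.mem_coe, Set.mem_singleton_iff] at hp hr
    by_contra hne
    have hp0 := hbr _ hy0.2 _ hp.1.1 hy0.1 hp.1.2 (Ne.symm hp.2)
    have hr0 := hbr _ hy0.2 _ hr.1.1 hy0.1 hr.1.2 (Ne.symm hr.2)
    rw [hg] at hpr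
    simp only at hpr
    rw [div_eq_div_iff hp0 hr0] at hpr
    have := plu p r
    rw [hpr, CharTwo.add_self_eq_zero] at this
    exact mul_ne_zero hN (hbr _ hp.1.1 _ hr.1.1 hp.1.2 hr.1.2 hne) this.symm
  have hcardE : ((K.erase x).erase y0).card + 2 = K.card := by
    rw [Finset.card_erase_of_mem (Finset.mem_erase.2 hy0), Finset.card_erase_of_mem hx]; omega
  have hDc : D.card + K.card = Fintype.card F + 2 := by
    have h1 := Finset.card_sdiff_add_card_eq_card (Finset.subset_univ (((K.erase x).erase y0).image g))
    rw [Finset.card_image_of_injOn hginj, Finset.card_univ] at h1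
    change D.card + _ = _ at h1
    omega
  have hL3 : ∀ i p r y, br x p r * L i y = L i r * br x p y + L i p * br x r y := by
    intro i p r y
    simp only [hL]
    linear_combination br_three x y1 p r y + i * br_three x y0 p r y
  have hLne : ∀ i ∈ D, ∀ y ∈ K, y ≠ x → L i y ≠ 0 := by
    intro i hi y hy hyx h
    simp only [hL] at h
    by_cases hyy : y = y0
    · subst hyy
      rw [br_self23, mul_zero, add_zero, br_swap23] at h
      exact hN h
    · rw [hD, Finset.mem_sdiff] at hi
      apply hi.2
      rw [Finset.mem_image]
      refine ⟨y, by simp [hy, hyx, hyy], ?_⟩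
      rw [hg]
      simp only
      rw [div_eq_iff (hbr _ hy0.2 _ hy hy0.1 hyx (Ne.symm hyy))]
      exact CharTwo.add_eq_zero.1 h
  refine ⟨D, L, hDc, hL3, hLne, ?_, ?_, ?_, ?_⟩
  · intro i; simp [hL, br_self13]
  · intro i c u d v
    simp only [hL, br, Pi.add_apply, Pi.smul_apply, smul_eq_mul]; ring
  · intro v hv
    have h0 : br x y0 v ≠ 0 := by rw [br_swap23]; exact hv y0 hy0.2 hy0.1
    refine ⟨br x y1 v / br x y0 v, ?_, ?_⟩
    · rw [hD, Finset.mem_sdiff]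
      refine ⟨Finset.mem_univ _, fun h => ?_⟩
      rw [Finset.mem_image] at h
      obtain ⟨p, hp, hpe⟩ := h
      simp only [Finset.mem_erase] at hp
      rw [hg] at hpe
      simp only at hpe
      rw [div_eq_div_iff (hbr _ hy0.2 _ hp.2.2 hy0.1 hp.2.1 (Ne.symm hp.1)) h0] at hpe
      have := plu p v
      rw [hpe, CharTwo.add_self_eq_zero] at this
      refine mul_ne_zero hN (hv p hp.2.2 hp.2.1) ?_
      rw [br_swap23 x v p, ← this]
    · simp only [hL]
      rw [div_mul_cancel₀ _ h0, CharTwo.add_self_eq_zero]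
  · have hmain : ∀ y ∈ K, y ≠ x → ∀ z ∈ K, z ≠ x → y ≠ z →
        (∏ i ∈ D, L i y) * ∏ p ∈ (K.erase x).erase y, br x p y
        = (∏ i ∈ D, L i z) * ∏ p ∈ (K.erase x).erase z, br x p z := by
      intro y hy hyx z hz hzx hyz
      set E := ((K.erase x).erase y).erase z with hE
      have hEmem : ∀ p, p ∈ E ↔ p ≠ z ∧ p ≠ y ∧ p ≠ x ∧ p ∈ K := by
        intro p; simp [hE]
      have hEc : E.card + 3 = K.card := by
        rw [hE, Finset.card_erase_of_mem (by simp [hz, hzx, Ne.symm hyz]),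
          Finset.card_erase_of_mem (by simp [hy, hyx]), Finset.card_erase_of_mem hx]; omega
      have hyzne : br x y z ≠ 0 := hbr y hy z hz hyx hzx hyz
      have hEz : ∀ p ∈ E, br x p z ≠ 0 := fun p hp => by
        rw [hEmem] at hp; exact hbr p hp.2.2.2 z hz hp.2.2.1 hzx hp.1
      have hEy : ∀ p ∈ E, br x p y ≠ 0 := fun p hp => by
        rw [hEmem] at hp; exact hbr p hp.2.2.2 y hy hp.2.2.1 hyx hp.2.1
      have hDy : ∀ i ∈ D, L i y ≠ 0 := fun i hi => hLne i hi y hy hyx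
      have hDz : ∀ i ∈ D, L i z ≠ 0 := fun i hi => hLne i hi z hz hzx
      set u : F → F := fun i => L i z / L i y with hu
      set w : (Fin 3 → F) → F := fun p => br x p z / br x p y with hw
      have huinj : Set.InjOn u (D : Set F) := by
        intro i hi j hj hij
        simp only [hu] at hij
        rw [div_eq_div_iff (hDy i hi) (hDy j hj)] at hij
        simp only [hL] at hij
        have h2 := plu y z
        have h4 : (i - j) * (br x y0 y1 * br x y z) = 0 := by
          rw [← h2, ← CharTwo.sub_eq_add]
          linear_combination hij
        rcases mul_eq_zero.1 h4 with h | h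
        · exact sub_eq_zero.1 h
        · exact absurd h (mul_ne_zero hN hyzne)
      have hwinj : Set.InjOn w (E : Set (Fin 3 → F)) := by
        intro p hp r hr hpr
        simp only [hw] at hpr
        rw [div_eq_div_iff (hEy p hp) (hEy r hr)] at hpr
        by_contra hne
        have h2 := br_three x z p r y
        have hp' := (hEmem p).1 hp
        have hr' := (hEmem r).1 hr
        refine mul_ne_zero (hbr p hp'.2.2.2 r hr'.2.2.2 hp'.2.2.1 hr'.2.2.1 hne) hyzne ?_
        rw [br_swap23 x y z, h2, br_swap23 x z r, br_swap23 x z p, hpr, CharTwo.add_self_eq_zero]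
      have hdisj : Disjoint (D.image u) (E.image w) := by
        rw [Finset.disjoint_left]
        intro a ha hb
        obtain ⟨i, hi, rfl⟩ := Finset.mem_image.1 ha
        obtain ⟨p, hp, hpe⟩ := Finset.mem_image.1 hb
        simp only [hu, hw] at hpe
        rw [div_eq_div_iff (hEy p hp) (hDy i hi)] at hpe
        have hp' := (hEmem p).1 hp
        have h2 := hL3 i y z p
        refine mul_ne_zero hyzne (hLne i hi p hp'.2.2.2 hp'.2.2.1) ?_
        rw [h2, br_swap23 x y p, br_swap23 x z p, ← hpe, mul_comm (L i y), CharTwo.add_self_eq_zero]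
      have hun : D.image u ∪ E.image w = Finset.univ.erase 0 := by
        apply Finset.eq_of_subset_of_card_le
        · intro a ha
          rw [Finset.mem_erase]
          refine ⟨?_, Finset.mem_univ _⟩
          rcases Finset.mem_union.1 ha with ha | ha
          · obtain ⟨i, hi, rfl⟩ := Finset.mem_image.1 ha
            exact div_ne_zero (hDz i hi) (hDy i hi)
          · obtain ⟨p, hp, rfl⟩ := Finset.mem_image.1 ha
            exact div_ne_zero (hEz p hp) (hEy p hp)
        · rw [Finset.card_union_of_disjoint hdisj, Finset.card_image_of_injOn huinj,
            Finset.card_image_of_injOn hwinj, Finset.card_erase_of_mem (Finset.mem_univ _),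
            Finset.card_univ]
          omega
      have hprod : ∏ a ∈ Finset.univ.erase (0 : F), a = 1 := by
        have h1 := FiniteField.prod_univ_units_id_eq_neg_one (K := F)
        have h2 := congrArg (Units.val) h1
        rw [Units.coe_prod, Units.val_neg, Units.val_one, CharTwo.neg_eq] at h2
        rw [← h2]
        symm
        refine Finset.prod_bij (fun (a : Fˣ) _ => (a : F)) (by simp) (fun a _ b _ h => Units.ext h)
          (fun b hb => ⟨Units.mk0 b (Finset.ne_of_mem_erase hb), Finset.mem_univ _, rfl⟩)
          (fun _ _ => rfl)
      rw [← hun, Finset.prod_union hdisj, Finset.prod_image huinj, Finset.prod_image hwinj] at hprod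
      simp only [hu, hw] at hprod
      rw [Finset.prod_div_distrib, Finset.prod_div_distrib, div_mul_div_comm,
        div_eq_one_iff_eq (mul_ne_zero (Finset.prod_ne_zero_iff.2 hDy)
          (Finset.prod_ne_zero_iff.2 hEy))] at hprod
      have hE' : E = ((K.erase x).erase z).erase y := by rw [hE, Finset.erase_right_comm]
      rw [← Finset.mul_prod_erase ((K.erase x).erase y) _ (a := z)
        (by simp [hz, hzx, Ne.symm hyz]), ← hE,
        ← Finset.mul_prod_erase ((K.erase x).erase z) _ (a := y)
        (by simp [hy, hyx, hyz]), ← hE', br_swap23 x z y]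
      linear_combination -(br x y z) * hprod
    refine ⟨(∏ i ∈ D, L i y0) * ∏ p ∈ (K.erase x).erase y0, br x p y0, ?_, fun y hy hyx => ?_⟩
    · refine mul_ne_zero (Finset.prod_ne_zero_iff.2 fun i hi => hLne i hi y0 hy0.2 hy0.1)
        (Finset.prod_ne_zero_iff.2 fun p hp => ?_)
      simp only [Finset.mem_erase] at hp
      exact hbr p hp.2.2 y0 hy0.2 hp.2.1 hy0.1 hp.1
    · by_cases h : y = y0
      · rw [h]
      · exact hmain y hy hyx y0 hy0.2 hy0.1 h

/-- The planar bound. -/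
lemma planar [CharP F 2] (K T : Finset (Fin 3 → F))
    (hK : ∀ x ∈ K, ∀ y ∈ K, ∀ z ∈ K, x ≠ y → x ≠ z → y ≠ z → br x y z ≠ 0)
    (a b Q : Fin 3 → F) (ha : a ∈ K) (hb : b ∈ K) (hab : a ≠ b) (α β : F) (hβ : β ≠ 0)
    (hQ : Q = α • a + β • b) (hTK : T ⊆ K)
    (hT : ∀ x ∈ T, ∀ y ∈ K, y ≠ x → br x Q y ≠ 0) :
    T.card + K.card ≤ Fintype.card F + 2 := by
  have hab0 : br a Q b = 0 := by
    rw [hQ]; simp only [br, Pi.add_apply, Pi.smul_apply, smul_eq_mul]; ring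
  have hba0 : br b Q a = 0 := by
    rw [hQ]; simp only [br, Pi.add_apply, Pi.smul_apply, smul_eq_mul]; ring
  have haT : a ∉ T := fun h => hT a h b hb hab.symm hab0
  have hbT : b ∉ T := fun h => hT b h a ha hab hba0
  by_cases h3 : 3 ≤ K.card
  swap
  · have h1 : ({a, b} : Finset _) ⊆ K \ T := by
      intro x hx
      simp only [Finset.mem_insert, Finset.mem_singleton] at hx
      rcases hx with rfl | rfl <;> simp [*]
    have h2 := Finset.card_le_card h1
    rw [Finset.card_pair hab] at h2
    have h4 := Finset.card_sdiff_add_card_eq_card hTK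
    omega
  choose! D L hDc hL3 hLne hLx hLlin hLT C hC hCe using tangent_form K hK h3
  by_contra hcon
  have hDa := hDc a ha
  obtain ⟨S, hST, hSc⟩ := Finset.exists_subset_card_eq (s := T) (n := (D a).card + 1) (by omega)
  have haS : a ∉ S := fun h => haT (hST h)
  set A := insert a S with hA
  have hAK : A ⊆ K := by
    intro x hx
    rcases Finset.mem_insert.1 hx with rfl | h
    · exact ha
    · exact hTK (hST h)
  have hAc : A.card = (D a).card + 2 := by rw [hA, Finset.card_insert_of_notMem haS, hSc]
  have hAQ : ∀ x ∈ A, ∀ y ∈ A, x ≠ y → br x Q y ≠ 0 := by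
    intro x hx y hy hxy
    rcases Finset.mem_insert.1 hx with rfl | h
    · rcases Finset.mem_insert.1 hy with rfl | h'
      · exact absurd rfl hxy
      · rw [br_swap23, br_swap12, br_swap23]
        exact hT y (hST h') x ha hxy
    · exact hT x (hST h) y (hAK hy) hxy.symm
  have hQA : Q ∉ A := by
    intro h
    obtain ⟨y, hy, hne⟩ : ∃ y ∈ A, y ≠ Q := by
      have : 1 < A.card := by omega
      obtain ⟨y, hy, hh⟩ := Finset.exists_mem_ne this Q
      exact ⟨y, hy, hh⟩
    exact hAQ Q h y hy hne.symm (br_self12 _ _)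
  set f : (Fin 3 → F) → (Fin 3 → F) → F := fun x v => ∏ i ∈ D x, L x i v with hf
  set s : (Fin 3 → F) → (Fin 3 → F) → F := fun x y =>
    (∏ p ∈ (K.erase x).erase y, br x p y)⁻¹ * ((br x y Q)⁻¹ * ∏ z ∈ (A.erase x).erase y, (br x y z)⁻¹) with hs
  have hssymm : ∀ x y, s x y = s y x := by
    intro x y
    simp only [hs]
    rw [Finset.erase_right_comm (s := K), Finset.erase_right_comm (s := A), br_swap12 x y Q]
    have e1 : ∏ p ∈ (K.erase y).erase x, br x p y = ∏ p ∈ (K.erase y).erase x, br y p x :=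
      Finset.prod_congr rfl fun p _ => by rw [br_swap23 x p y, br_swap12 x y p, br_swap23]
    have e2 : ∏ z ∈ (A.erase y).erase x, (br x y z)⁻¹ = ∏ z ∈ (A.erase y).erase x, (br y x z)⁻¹ :=
      Finset.prod_congr rfl fun p _ => by rw [br_swap12 x y p]
    rw [e1, e2]
  have hid : ∀ x ∈ A, (C x)⁻¹ * (f x Q * ∏ z ∈ A.erase x, (br x Q z)⁻¹) = ∑ y ∈ A.erase x, s x y := by
    intro x hx
    have hxK := hAK hx
    have hQx : Q ∉ A.erase x := fun h => hQA (Finset.mem_of_mem_erase h)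
    have h1 := lag (br x) (br_swap23 x) (br_self23 x) (L x) (hL3 x hxK) (D x) (insert Q (A.erase x))
      (by
        rw [Finset.card_insert_of_notMem hQx, Finset.card_erase_of_mem hx]
        have := hDc x hxK
        omega)
      (by
        intro y hy z hz hyz
        rw [Finset.mem_insert, Finset.mem_erase] at hy hz
        rcases hy with rfl | hy
        · rcases hz with rfl | hz
          · exact absurd rfl hyz
          · exact hAQ x hx z hz.2 (Ne.symm hz.1)
        · rcases hz with rfl | hz
          · rw [br_swap23]; exact hAQ x hx y hy.2 (Ne.symm hy.1)
          · exact hK x hxK y (hAK hy.2) z (hAK hz.2) (Ne.symm hy.1) (Ne.symm hz.1) hyz)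
    rw [Finset.sum_insert hQx, Finset.erase_insert hQx, CharTwo.add_eq_zero] at h1
    simp only [hf]
    rw [h1, Finset.mul_sum]
    refine Finset.sum_congr rfl fun y hy => ?_
    have hy' := Finset.mem_erase.1 hy
    have hyQ : Q ≠ y := fun h => hQx (h ▸ hy)
    rw [Finset.erase_insert_of_ne hyQ, Finset.prod_insert (by
      intro h; exact hQx (Finset.mem_of_mem_erase h))]
    simp only [hs]
    rw [← mul_assoc]
    congr 1
    have hc := hCe x hxK y (hAK hy'.2) hy'.1
    have hCx := hC x hxK
    rw [← hc] at hCx ⊢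
    have h5 := right_ne_zero_of_mul hCx
    have h6 := left_ne_zero_of_mul hCx
    rw [mul_inv, mul_right_comm, inv_mul_cancel₀ h6, one_mul]
  have hsum := sum_symm s hssymm A
  rw [← Finset.sum_congr rfl hid, hA, Finset.sum_insert haS, Finset.sum_eq_zero (s := S), add_zero,
    ← hA] at hsum
  · refine mul_ne_zero (inv_ne_zero (hC a ha)) (mul_ne_zero ?_ ?_) hsum
    · simp only [hf]
      refine Finset.prod_ne_zero_iff.2 fun i hi => ?_
      rw [hQ, hLlin a ha, hLx a ha, mul_zero, zero_add]
      exact mul_ne_zero hβ (hLne a ha i hi b hb hab.symm)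
    · refine Finset.prod_ne_zero_iff.2 fun z hz => inv_ne_zero ?_
      have hz' := Finset.mem_erase.1 hz
      exact hAQ a (by simp [hA]) z hz'.2 (Ne.symm hz'.1)
  · intro x hxS
    have hxT := hST hxS
    obtain ⟨i, hi, hi0⟩ := hLT x (hTK hxT) Q (hT x hxT)
    simp only [hf]
    rw [Finset.prod_eq_zero hi hi0]
    simp
end planar
end CapAux

namespace CapAux
section space
variable {F : Type*} [Field F]

lemma br_ne_of_li (x y z : Fin 3 → F) (h : LinearIndependent F ![x, y, z]) : br x y z ≠ 0 := by
  have h1 : LinearIndependent F (Matrix.of ![x, y, z]).row := h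
  rw [Matrix.linearIndependent_rows_iff_isUnit, Matrix.isUnit_iff_isUnit_det, isUnit_iff_ne_zero,
    Matrix.det_fin_three] at h1
  intro h0
  apply h1
  rw [← h0]
  simp [br]
  ring

/-- The bound on one plane through the bisecant, in terms of vectors. -/
lemma fibre_bound [Fintype F] [CharP F 2] {V : Type*} [AddCommGroup V] [Module F V] [Fintype V]
    [DecidableEq V] [DecidableEq F]
    (S T : Finset V) (hTS : T ⊆ S)
    (hcap : ∀ u ∈ S, ∀ v ∈ S, ∀ w ∈ S, LinearIndependent F ![u, v] → LinearIndependent F ![u, w] →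
      LinearIndependent F ![v, w] → LinearIndependent F ![u, v, w])
    (a b Q : V) (ha : a ∈ S) (hb : b ∈ S) (hab : LinearIndependent F ![a, b]) (α β : F)
    (hβ : β ≠ 0) (hQ : Q = α • a + β • b)
    (hT : ∀ v ∈ T, ∀ u ∈ S, ∀ c d : F, u = c • v + d • Q → ¬ LinearIndependent F ![v, u])
    (w0 : V) (hw0 : w0 ∉ Submodule.span F {a, b})
    (S' T' : Finset V) (hS' : ∀ v ∈ S', v ∈ S ∧ v - w0 ∈ Submodule.span F {a, b})
    (hT' : ∀ v ∈ T', v ∈ T ∧ v - w0 ∈ Submodule.span F {a, b}) :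
    T'.card + S'.card ≤ Fintype.card F := by
  let f : (Fin 3 → F) →ₗ[F] V :=
    (LinearMap.proj 0).smulRight a + (LinearMap.proj 1).smulRight b + (LinearMap.proj 2).smulRight w0
  have hf : ∀ x, f x = x 0 • a + x 1 • b + x 2 • w0 := fun x => by simp [f]
  have hinj : ∀ x, f x = 0 → x = 0 := by
    intro x hx
    rw [hf] at hx
    have h2 : x 2 = 0 := by
      by_contra h2
      apply hw0
      rw [Submodule.mem_span_pair]
      refine ⟨-(x 2)⁻¹ * x 0, -(x 2)⁻¹ * x 1, ?_⟩
      have : w0 = (x 2)⁻¹ • (x 2 • w0) := by rw [smul_smul, inv_mul_cancel₀ h2, one_smul]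
      have h5 : x 2 • w0 = -(x 0 • a + x 1 • b) := by
        rw [eq_neg_iff_add_eq_zero, add_comm]; exact hx
      rw [this, h5, mul_smul, mul_smul, smul_neg, smul_add, neg_smul, neg_smul]; abel
    rw [h2, zero_smul, add_zero] at hx
    have := LinearIndependent.pair_iff.1 hab _ _ hx
    funext i
    fin_cases i
    · exact this.1
    · exact this.2
    · exact h2
  have hfi : Function.Injective f := by
    rw [injective_iff_map_eq_zero]; exact hinj
  set e1 : Fin 3 → F := ![1, 0, 0] with he1
  set e2 : Fin 3 → F := ![0, 1, 0] with he2
  set K1 : Finset (Fin 3 → F) := Finset.univ.filter (fun x => x 2 = 1 ∧ f x ∈ S) with hK1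
  set T1 : Finset (Fin 3 → F) := Finset.univ.filter (fun x => x 2 = 1 ∧ f x ∈ T) with hT1
  have hfe1 : f e1 = a := by rw [hf]; simp [he1]
  have hfe2 : f e2 = b := by rw [hf]; simp [he2]
  have h12 : e1 ≠ e2 := fun h => by
    have := congrFun h 0; simp [he1, he2] at this
  set K' := insert e1 (insert e2 K1) with hK'
  have hn2 : e2 ∉ K1 := by simp [hK1, he2]
  have hn1 : e1 ∉ insert e2 K1 := by
    rw [Finset.mem_insert, not_or]
    exact ⟨h12, by simp [hK1, he1]⟩
  have hK'c : K'.card = K1.card + 2 := by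
    rw [hK', Finset.card_insert_of_notMem hn1, Finset.card_insert_of_notMem hn2]
  have hmem : ∀ x ∈ K', x = e1 ∨ x = e2 ∨ (x 2 = 1 ∧ f x ∈ S) := by
    intro x hx
    simpa [hK', hK1] using hx
  have hfS : ∀ x ∈ K', f x ∈ S := by
    intro x hx
    rcases hmem x hx with rfl | rfl | h
    · rw [hfe1]; exact ha
    · rw [hfe2]; exact hb
    · exact h.2
  have hpair : ∀ x ∈ K', ∀ y ∈ K', x ≠ y → LinearIndependent F ![f x, f y] := by
    intro x hx y hy hxy
    rw [LinearIndependent.pair_iff]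
    intro s t hst
    rw [← map_smul, ← map_smul, ← map_add] at hst
    have h0 := hinj _ hst
    have c0 := congrFun h0 0
    have c1 := congrFun h0 1
    have c2 := congrFun h0 2
    simp only [Pi.add_apply, Pi.smul_apply, smul_eq_mul, Pi.zero_apply] at c0 c1 c2
    rcases hmem x hx with rfl | rfl | h <;> rcases hmem y hy with rfl | rfl | h'
    · exact absurd rfl hxy
    · simp [he1, he2] at c0 c1; exact ⟨c0, c1⟩
    · simp [he1, h'.1] at c2; simp [he1, c2] at c0; exact ⟨c0, c2⟩
    · simp [he1, he2] at c0 c1; exact ⟨c1, c0⟩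
    · exact absurd rfl hxy
    · simp [he2, h'.1] at c2; simp [he2, c2] at c1; exact ⟨c1, c2⟩
    · simp [he1, h.1] at c2; simp [he1, c2] at c0; exact ⟨c2, c0⟩
    · simp [he2, h.1] at c2; simp [he2, c2] at c1; exact ⟨c2, c1⟩
    · rw [h.1, h'.1, mul_one, mul_one] at c2
      by_cases hs : s = 0
      · subst hs; simpa using c2
      · exfalso
        apply hxy
        have ht : t = -s := by linear_combination c2
        subst ht
        funext i
        fin_cases i
        · exact mul_left_cancel₀ hs (show s * x 0 = s * y 0 by linear_combination c0)
        · exact mul_left_cancel₀ hs (show s * x 1 = s * y 1 by linear_combination c1)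
        · exact h.1.trans h'.1.symm
  have key := planar K' T1 (by
      intro x hx y hy z hz hxy hxz hyz
      apply br_ne_of_li
      have := hcap _ (hfS x hx) _ (hfS y hy) _ (hfS z hz) (hpair x hx y hy hxy)
        (hpair x hx z hz hxz) (hpair y hy z hz hyz)
      apply LinearIndependent.of_comp f
      convert this using 1
      funext i
      fin_cases i <;> rfl)
    e1 e2 (α • e1 + β • e2) (by simp [hK']) (by simp [hK']) h12 α β hβ rfl
    (by
      intro x hx
      simp only [hT1, Finset.mem_filter] at hx
      simp only [hK', hK1, Finset.mem_insert, Finset.mem_filter]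
      exact Or.inr (Or.inr ⟨hx.1, hx.2.1, hTS hx.2.2⟩))
    (by
      intro x hx y hy hyx h0
      simp only [hT1, Finset.mem_filter] at hx
      have hxK : x ∈ K' := by
        simp only [hK', hK1, Finset.mem_insert, Finset.mem_filter]
        exact Or.inr (Or.inr ⟨hx.1, hx.2.1, hTS hx.2.2⟩)
      have hyeq : y = y 2 • x + ((y 1 - y 2 * x 1) / β) • (α • e1 + β • e2) := by
        simp [br, he1, he2, hx.2.1] at h0
        funext i
        fin_cases i
        · simp [he1, he2]
          field_simp
          linear_combination -h0
        · simp [he1, he2]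
          field_simp
          ring
        · simp [he1, he2, hx.2.1]
      refine hT (f x) hx.2.2 (f y) (hfS y hy) (y 2) ((y 1 - y 2 * x 1) / β) ?_
        (hpair x hxK y hy hyx.symm)
      conv_lhs => rw [hyeq]
      rw [map_add, map_smul, map_smul, map_add, map_smul, map_smul, hfe1, hfe2, hQ])
  have hpre : ∀ v, v - w0 ∈ Submodule.span F {a, b} → ∃ x : Fin 3 → F, x 2 = 1 ∧ f x = v := by
    intro v hv
    obtain ⟨c, d, hcd⟩ := Submodule.mem_span_pair.1 hv
    refine ⟨![c, d, 1], rfl, ?_⟩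
    rw [hf]
    simp [hcd]
  have hSle : S'.card ≤ K1.card := by
    refine (Finset.card_le_card (t := K1.image f) ?_).trans Finset.card_image_le
    intro v hv
    obtain ⟨h1, h2⟩ := hS' v hv
    obtain ⟨x, hx, rfl⟩ := hpre v h2
    exact Finset.mem_image_of_mem _ (by simp [hK1, hx, h1])
  have hTle : T'.card ≤ T1.card := by
    refine (Finset.card_le_card (t := T1.image f) ?_).trans Finset.card_image_le
    intro v hv
    obtain ⟨h1, h2⟩ := hT' v hv
    obtain ⟨x, hx, rfl⟩ := hpre v h2
    exact Finset.mem_image_of_mem _ (by simp [hT1, hx, h1])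
  omega

variable {V : Type*} [AddCommGroup V] [Module F V]

lemma not_li_iff (u v : V) (hu : u ≠ 0) (hv : v ≠ 0) :
    ¬ LinearIndependent F ![u, v] ↔ Projectivization.mk F u hu = Projectivization.mk F v hv := by
  rw [LinearIndependent.pair_iff' hu, eq_comm, Projectivization.mk_eq_mk_iff']
  push Not
  rfl

lemma finrank_pair (u v : V) (h : LinearIndependent F ![u, v]) :
    Module.finrank F (Submodule.span F {u, v}) = 2 := by
  have h1 := finrank_span_eq_card h
  have h2 : Set.range ![u, v] = {u, v} := by
    ext x
    simp [eq_comm, or_comm]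
  rw [h2, Fintype.card_fin] at h1
  exact h1

lemma li3_of_finrank (u v w : V)
    (h : ¬ Module.finrank F ↥(Submodule.span F {u} ⊔ Submodule.span F {v} ⊔ Submodule.span F {w}) ≤ 2) :
    LinearIndependent F ![u, v, w] := by
  rw [linearIndependent_iff_card_le_finrank_span, Set.finrank]
  have : Submodule.span F (Set.range ![u, v, w])
      = Submodule.span F {u} ⊔ Submodule.span F {v} ⊔ Submodule.span F {w} := by
    rw [← Submodule.span_union, ← Submodule.span_union]
    congr 1
    ext x
    simp [eq_comm]
  rw [this, Fintype.card_fin]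
  omega

open Classical in
/-- The nonzero vectors representing points of `X`. -/
noncomputable def vec [Fintype V] (X : Set (Projectivization F V)) : Finset V :=
  Finset.univ.filter fun v => ∃ h : v ≠ 0, Projectivization.mk F v h ∈ X

lemma mem_vec [Fintype V] (X : Set (Projectivization F V)) (v : V) :
    v ∈ vec X ↔ ∃ h : v ≠ 0, Projectivization.mk F v h ∈ X := by simp [vec]

lemma mk_smul_rep (P : Projectivization F V) (c : Fˣ) (h : c • P.rep ≠ 0) :
    Projectivization.mk F (c • P.rep) h = P := by
  conv_rhs => rw [← Projectivization.mk_rep P]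
  rw [Projectivization.mk_eq_mk_iff]
  exact ⟨c, rfl⟩

lemma card_vec [Fintype F] [Fintype V] (X : Set (Projectivization F V)) :
    (vec X).card = X.ncard * (Fintype.card F - 1) := by
  classical
  have : Fintype (Projectivization F V) := Fintype.ofFinite _
  rw [← Fintype.card_units, ← Finset.card_univ, Set.ncard_eq_toFinset_card', ← Finset.card_product]
  symm
  have hne : ∀ (P : Projectivization F V) (c : Fˣ), c • P.rep ≠ 0 := fun P c =>
    smul_ne_zero c.ne_zero P.rep_nonzero
  refine Finset.card_bij (fun Pc _ => Pc.2 • Pc.1.rep) ?_ ?_ ?_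
  · rintro ⟨P, c⟩ h
    rw [mem_vec]
    refine ⟨hne P c, ?_⟩
    rw [mk_smul_rep]
    simpa using h
  · rintro ⟨P, c⟩ _ ⟨P', c'⟩ _ h
    simp only at h
    have hP : P = P' := by
      rw [← mk_smul_rep P c (hne P c), ← mk_smul_rep P' c' (hne P' c')]
      simp only [h]
    subst hP
    have : c = c' := by
      apply Units.ext
      exact smul_left_injective F P.rep_nonzero h
    rw [this]
  · intro v hv
    obtain ⟨h, hX⟩ := (mem_vec _ _).1 hv
    obtain ⟨c, hc⟩ := Projectivization.exists_smul_eq_mk_rep F v h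
    refine ⟨(Projectivization.mk F v h, c⁻¹), by simpa using hX, ?_⟩
    simp only
    rw [← hc, inv_smul_smul]

end space
end CapAux

theorem stmt14 (F : Type*) [Field F] [Fintype F] (q : ℕ) (hcard : Fintype.card F = q)
    (hqeven : Even q) (n : ℕ) (hn : 3 ≤ n)
    (K : Set (PGPoint F n)) (hK : IsCompleteCap K) :
    ∀ Q : PGPoint F n, Q ∉ K →
      (({ℓ : Submodule F (Fin (n + 1) → F) | IsTangent K ℓ ∧ Q.submodule ≤ ℓ}.ncard : ℝ))
        ≤ (∑ i ∈ Finset.Icc 1 (n - 1), (q : ℝ) ^ i) + 2 - (K.ncard : ℝ) := by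
  classical
  intro Q hQK
  have : CharP F 2 := by
    apply ringChar.of_eq
    rw [FiniteField.even_card_iff_char_two, hcard]
    exact Nat.even_iff.1 hqeven
  obtain ⟨hcap, hcomp⟩ := hK
  -- a bisecant through Q
  obtain ⟨P1, hP1, P2, hP2, h12, hcol⟩ : ∃ P1 ∈ K, ∃ P2 ∈ K, P1 ≠ P2 ∧ Coll3 P1 P2 Q := by
    have h := hcomp Q hQK
    unfold IsCap at h
    push Not at h
    obtain ⟨A, hA, B, hB, C, hC, hAB, hAC, hBC, hcol⟩ := h
    rw [Set.mem_insert_iff] at hA hB hC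
    rcases hA with rfl | hA
    · have hB' := hB.resolve_left (Ne.symm hAB)
      have hC' := hC.resolve_left (Ne.symm hAC)
      refine ⟨B, hB', C, hC', hBC, ?_⟩
      unfold Coll3 at hcol ⊢
      rwa [sup_assoc, sup_comm] at hcol
    · rcases hB with rfl | hB
      · have hC' := hC.resolve_left (Ne.symm hBC)
        refine ⟨A, hA, C, hC', hAC, ?_⟩
        unfold Coll3 at hcol ⊢
        rwa [sup_right_comm] at hcol
      · rcases hC with rfl | hC
        · exact ⟨A, hA, B, hB, hAB, hcol⟩
        · exact absurd hcol (hcap A hA B hB C hC hAB hAC hBC)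
  set a := P1.rep with ha
  set b := P2.rep with hb
  have hQ1 : Q ≠ P1 := fun h => hQK (h ▸ hP1)
  have hQ2 : Q ≠ P2 := fun h => hQK (h ▸ hP2)
  have hab : LinearIndependent F ![a, b] := by
    by_contra h
    rw [CapAux.not_li_iff a b P1.rep_nonzero P2.rep_nonzero, Projectivization.mk_rep,
      Projectivization.mk_rep] at h
    exact h12 h
  have hW2 : Module.finrank F (Submodule.span F {a, b}) = 2 :=
    CapAux.finrank_pair a b hab
  have hQW : Q.rep ∈ Submodule.span F {a, b} := by
    unfold Coll3 at hcol
    have hle : Submodule.span F {a, b} ≤ P1.submodule ⊔ P2.submodule ⊔ Q.submodule := by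
      rw [Submodule.span_insert, ← Projectivization.submodule_eq, ← Projectivization.submodule_eq]
      exact le_sup_left
    rw [Submodule.eq_of_le_of_finrank_le hle (by rw [hW2]; exact hcol)]
    apply (le_sup_right : Q.submodule ≤ _)
    rw [Projectivization.submodule_eq]
    exact Submodule.mem_span_singleton_self _
  obtain ⟨α, β, hαβ⟩ := Submodule.mem_span_pair.1 hQW
  have hβ : β ≠ 0 := by
    rintro rfl
    rw [zero_smul, add_zero] at hαβ
    apply hQ1
    rw [← Projectivization.mk_rep Q, ← Projectivization.mk_rep P1, Projectivization.mk_eq_mk_iff']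
    exact ⟨α, hαβ⟩
  have hα : α ≠ 0 := by
    rintro rfl
    rw [zero_smul, zero_add] at hαβ
    apply hQ2
    rw [← Projectivization.mk_rep Q, ← Projectivization.mk_rep P2, Projectivization.mk_eq_mk_iff']
    exact ⟨β, hαβ⟩
  have memsub : ∀ (P : PGPoint F n) (W : Submodule F (Fin (n + 1) → F)), P.submodule ≤ W ↔ P.rep ∈ W := by
    intro P W
    rw [Projectivization.submodule_eq, Submodule.span_singleton_le_iff_mem]
  -- points of contact of the tangents through Q
  set T : Set (PGPoint F n) := {R | R ∈ K ∧ R ≠ P1 ∧ R ≠ P2 ∧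
    ∀ P ∈ K, P.submodule ≤ Q.submodule ⊔ R.submodule → P = R} with hTdef
  have hfin : Finite (PGPoint F n) := inferInstance
  have hcount : {ℓ : Submodule F (Fin (n + 1) → F) | IsTangent K ℓ ∧ Q.submodule ≤ ℓ}.ncard ≤ T.ncard := by
    refine (Set.ncard_le_ncard (t := Set.image (fun R : PGPoint F n => Q.submodule ⊔ R.submodule) T) ?_
      (Set.toFinite _)).trans (Set.ncard_image_le (Set.toFinite _))
    rintro ℓ ⟨⟨hℓ2, hℓ1⟩, hQℓ⟩
    obtain ⟨R, hR⟩ := Set.ncard_eq_one.1 hℓ1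
    have hRm : R ∈ ptsIn ℓ ∩ K := by rw [hR]; rfl
    have huniq : ∀ P ∈ K, P.submodule ≤ ℓ → P = R := by
      intro P hP hPl
      have : P ∈ ptsIn ℓ ∩ K := ⟨hPl, hP⟩
      rw [hR] at this
      exact this
    have hRl : R.submodule ≤ ℓ := hRm.1
    have hQR : Q ≠ R := fun h => hQK (h ▸ hRm.2)
    have hsup : Q.submodule ⊔ R.submodule = ℓ := by
      apply Submodule.eq_of_le_of_finrank_le (sup_le hQℓ hRl)
      rw [hℓ2]
      have hli : LinearIndependent F ![Q.rep, R.rep] := by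
        by_contra h
        rw [CapAux.not_li_iff _ _ Q.rep_nonzero R.rep_nonzero, Projectivization.mk_rep,
          Projectivization.mk_rep] at h
        exact hQR h
      have h5 := CapAux.finrank_pair _ _ hli
      rw [Projectivization.submodule_eq, Projectivization.submodule_eq, ← Submodule.span_union]
      rw [Set.singleton_union]
      exact h5.ge
    rw [memsub] at hQℓ
    refine ⟨R, ⟨hRm.2, ?_, ?_, ?_⟩, hsup⟩
    · rintro rfl
      refine h12 (huniq P2 hP2 ?_).symm
      rw [memsub] at hRl ⊢
      have : b = β⁻¹ • (Q.rep - α • a) := by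
        rw [← hαβ, add_sub_cancel_left, inv_smul_smul₀ hβ]
      rw [← hb, this]
      exact ℓ.smul_mem _ (ℓ.sub_mem hQℓ (ℓ.smul_mem _ hRl))
    · rintro rfl
      refine h12 (huniq P1 hP1 ?_)
      rw [memsub] at hRl ⊢
      have : a = α⁻¹ • (Q.rep - β • b) := by
        rw [← hαβ, add_sub_cancel_right, inv_smul_smul₀ hα]
      rw [← ha, this]
      exact ℓ.smul_mem _ (ℓ.sub_mem hQℓ (ℓ.smul_mem _ hRl))
    · intro P hP hPl
      exact huniq P hP (hsup ▸ hPl)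
  set W := Submodule.span F {a, b} with hW
  set K0 : Set (PGPoint F n) := K \ {P1, P2} with hK0
  have hK0c : K0.ncard + 2 = K.ncard := by
    have h1 := Set.ncard_sdiff_add_ncard_of_subset (s := {P1, P2}) (t := K)
      (by rintro x (rfl | rfl) <;> assumption) (Set.toFinite _)
    rw [Set.ncard_pair h12] at h1
    exact h1
  have hcapv : ∀ u ∈ CapAux.vec K, ∀ v ∈ CapAux.vec K, ∀ w ∈ CapAux.vec K,
      LinearIndependent F ![u, v] → LinearIndependent F ![u, w] →
      LinearIndependent F ![v, w] → LinearIndependent F ![u, v, w] := by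
    intro u hu v hv w hw huv huw hvw
    obtain ⟨hu0, hu⟩ := (CapAux.mem_vec _ _).1 hu
    obtain ⟨hv0, hv⟩ := (CapAux.mem_vec _ _).1 hv
    obtain ⟨hw0, hw⟩ := (CapAux.mem_vec _ _).1 hw
    apply CapAux.li3_of_finrank
    have := hcap _ hu _ hv _ hw
      (fun h => (CapAux.not_li_iff u v hu0 hv0).2 h huv)
      (fun h => (CapAux.not_li_iff u w hu0 hw0).2 h huw)
      (fun h => (CapAux.not_li_iff v w hv0 hw0).2 h hvw)
    unfold Coll3 at this
    rwa [Projectivization.submodule_mk, Projectivization.submodule_mk,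
      Projectivization.submodule_mk] at this
  have haS : a ∈ CapAux.vec K :=
    (CapAux.mem_vec _ _).2 ⟨P1.rep_nonzero, by rw [Projectivization.mk_rep]; exact hP1⟩
  have hbS : b ∈ CapAux.vec K :=
    (CapAux.mem_vec _ _).2 ⟨P2.rep_nonzero, by rw [Projectivization.mk_rep]; exact hP2⟩
  have vmono : ∀ X Y : Set (PGPoint F n), X ⊆ Y → CapAux.vec X ⊆ CapAux.vec Y := by
    intro X Y hXY v hv
    obtain ⟨h, hX⟩ := (CapAux.mem_vec _ _).1 hv
    exact (CapAux.mem_vec _ _).2 ⟨h, hXY hX⟩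
  have hTv : ∀ v ∈ CapAux.vec T, ∀ u ∈ CapAux.vec K, ∀ c d : F, u = c • v + d • Q.rep →
      ¬ LinearIndependent F ![v, u] := by
    intro v hv u hu c d hcd
    obtain ⟨hv0, hv⟩ := (CapAux.mem_vec _ _).1 hv
    obtain ⟨hu0, hu⟩ := (CapAux.mem_vec _ _).1 hu
    rw [CapAux.not_li_iff v u hv0 hu0]
    refine (hv.2.2.2 _ hu ?_).symm
    rw [Projectivization.submodule_mk, Projectivization.submodule_mk,
      Submodule.span_singleton_le_iff_mem, hcd]
    refine Submodule.add_mem _ (Submodule.smul_mem _ _ (Submodule.mem_sup_right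
      (Submodule.mem_span_singleton_self _))) (Submodule.smul_mem _ _ (Submodule.mem_sup_left ?_))
    rw [Projectivization.submodule_eq]
    exact Submodule.mem_span_singleton_self _
  have hK0W : ∀ v ∈ CapAux.vec K0, v ∉ W := by
    intro v hv hvW
    obtain ⟨hv0, hv⟩ := (CapAux.mem_vec _ _).1 hv
    have hne1 : Projectivization.mk F v hv0 ≠ P1 := fun h => hv.2 (Or.inl h)
    have hne2 : Projectivization.mk F v hv0 ≠ P2 := fun h => hv.2 (Or.inr h)
    apply hcap P1 hP1 P2 hP2 _ hv.1 h12 hne1.symm hne2.symm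
    unfold Coll3
    have : P1.submodule ⊔ P2.submodule ⊔ (Projectivization.mk F v hv0).submodule ≤ W := by
      rw [Projectivization.submodule_mk]
      refine sup_le (sup_le ?_ ?_) ?_
      · rw [memsub]; exact Submodule.subset_span (by simp [ha])
      · rw [memsub]; exact Submodule.subset_span (by simp [hb])
      · rwa [Submodule.span_singleton_le_iff_mem]
    exact (Submodule.finrank_mono this).trans hW2.le
  have hTK0 : T ⊆ K0 := by
    rintro R ⟨h1, h2, h3, _⟩
    exact ⟨h1, by rintro (h | h) <;> contradiction⟩
  have : Fintype ((Fin (n + 1) → F) ⧸ W) := Fintype.ofFinite _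
  have hsumK := Finset.card_eq_sum_card_fiberwise (f := W.mkQ) (s := CapAux.vec K0)
    (t := Finset.univ.erase 0) (by
      intro v hv
      simp only [Finset.coe_erase, Finset.coe_univ, Set.mem_sdiff, Set.mem_univ, true_and,
        Set.mem_singleton_iff, Submodule.mkQ_apply, Submodule.Quotient.mk_eq_zero]
      exact hK0W v hv)
  have hsumT := Finset.card_eq_sum_card_fiberwise (f := W.mkQ) (s := CapAux.vec T)
    (t := Finset.univ.erase 0) (by
      intro v hv
      simp only [Finset.coe_erase, Finset.coe_univ, Set.mem_sdiff, Set.mem_univ, true_and,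
        Set.mem_singleton_iff, Submodule.mkQ_apply, Submodule.Quotient.mk_eq_zero]
      exact hK0W v (vmono _ _ hTK0 hv))
  have htot : (CapAux.vec T).card + (CapAux.vec K0).card
      ≤ (Finset.univ.erase (0 : (Fin (n + 1) → F) ⧸ W)).card * q := by
    rw [hsumK, hsumT, ← Finset.sum_add_distrib, ← smul_eq_mul]
    apply Finset.sum_le_card_nsmul
    intro w hw
    obtain ⟨w0, rfl⟩ := W.mkQ_surjective w
    have hw0 : w0 ∉ W := by
      simpa [Submodule.Quotient.mk_eq_zero] using hw
    rw [← hcard]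
    refine CapAux.fibre_bound (CapAux.vec K) (CapAux.vec T) (vmono _ _ (fun R h => h.1)) hcapv
      a b Q.rep haS hbS hab α β hβ hαβ.symm hTv w0 hw0 _ _ ?_ ?_
    · intro v hv
      rw [Finset.mem_filter] at hv
      exact ⟨vmono _ _ (fun R h => h.1) hv.1, (Submodule.Quotient.eq W).1 hv.2⟩
    · intro v hv
      rw [Finset.mem_filter] at hv
      exact ⟨hv.1, (Submodule.Quotient.eq W).1 hv.2⟩
  have hquot : Fintype.card ((Fin (n + 1) → F) ⧸ W) = q ^ (n - 1) := by
    rw [Module.card_eq_pow_finrank (K := F), hcard]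
    congr 1
    have := Submodule.finrank_quotient_add_finrank W
    rw [hW2, Module.finrank_fin_fun] at this
    omega
  rw [CapAux.card_vec, CapAux.card_vec, Finset.card_erase_of_mem (Finset.mem_univ _),
    Finset.card_univ, hquot, hcard] at htot
  have hq2 : 1 < q := hcard ▸ Fintype.one_lt_card
  have hgeom : (∑ i ∈ Finset.Icc 1 (n - 1), (q : ℝ) ^ i) * ((q : ℝ) - 1) = ((q : ℝ) ^ (n - 1) - 1) * q := by
    have h1 : ∑ i ∈ Finset.Icc 1 (n - 1), (q : ℝ) ^ i = q * ∑ i ∈ Finset.range (n - 1), (q : ℝ) ^ i := by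
      rw [Finset.mul_sum, Finset.range_eq_Ico, ← Finset.Ico_succ_right_eq_Icc,
        Finset.sum_Ico_eq_sum_range, Finset.sum_Ico_eq_sum_range]
      simp [pow_add]
    rw [h1, mul_assoc, geom_sum_mul]
    ring
  have htotR : ((T.ncard : ℝ) + K0.ncard) * ((q : ℝ) - 1) ≤ ((q : ℝ) ^ (n - 1) - 1) * q := by
    have h1 : (1 : ℕ) ≤ q ^ (n - 1) := Nat.one_le_pow _ _ (by omega)
    have h2 : ((T.ncard * (q - 1) + K0.ncard * (q - 1) : ℕ) : ℝ) ≤ (((q ^ (n - 1) - 1) * q : ℕ) : ℝ) := by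
      exact_mod_cast htot
    push_cast [Nat.cast_sub hq2.le, Nat.cast_sub h1] at h2
    linarith
  rw [← hgeom] at htotR
  have hq1 : (0 : ℝ) < (q : ℝ) - 1 := by
    have : (1 : ℝ) < q := by exact_mod_cast hq2
    linarith
  have hfinal := le_of_mul_le_mul_right htotR hq1
  have hc1 : ({ℓ : Submodule F (Fin (n + 1) → F) | IsTangent K ℓ ∧ Q.submodule ≤ ℓ}.ncard : ℝ) ≤ T.ncard := by
    exact_mod_cast hcount
  have hc2 : (K0.ncard : ℝ) + 2 = K.ncard := by exact_mod_cast hK0c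
  linarith
end

section
/- Let q be an even prime power with q > 2. Then the maximum value of k for which a k-cap exists in PG(3, q) is q² + 1; that is, every k-cap in PG(3, q) satisfies k ≤ q² + 1, and there exists a (q² + 1)-cap in PG(3, q). -/
open Module

open Classical in
/-- Number of points of `K` in the subspace `W`. -/
noncomputable def cnt {F : Type*} [Field F] (K : Finset (PGPoint F 3))
    (W : Submodule F (Fin 4 → F)) : ℕ := (K.filter (fun P => P.submodule ≤ W)).card

def Cap2 {F : Type*} [Field F] (K : Finset (PGPoint F 3)) : Prop :=
  ∀ W : Submodule F (Fin 4 → F), finrank F W = 2 → cnt K W ≤ 2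

section
variable {F : Type*} [Field F]

theorem finrank_inf_ker (W : Submodule F (Fin 4 → F)) (f : (Fin 4 → F) →ₗ[F] F) :
    finrank F W ≤ finrank F ↥(W ⊓ LinearMap.ker f) + 1 := by
  have h1 := Submodule.finrank_sup_add_finrank_inf_eq W (LinearMap.ker f)
  have h2 := LinearMap.finrank_range_add_finrank_ker f
  have h3 : finrank F (LinearMap.range f) ≤ 1 := by
    simpa using Submodule.finrank_le (LinearMap.range f)
  have h4 := Submodule.finrank_le (W ⊔ LinearMap.ker f)
  omega

theorem sub_eq_of_mem {A C D : Submodule F (Fin 4 → F)} (hAC : A ≤ C) (hAD : A ≤ D)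
    (hC : finrank F C = finrank F A + 1) (hD : finrank F D = finrank F A + 1)
    {x : Fin 4 → F} (hxA : x ∉ A) (hxC : x ∈ C) (hxD : x ∈ D) : C = D := by
  have h1 : A < C ⊓ D := by
    refine lt_of_le_of_ne (le_inf hAC hAD) ?_
    intro h
    exact hxA (h ▸ ⟨hxC, hxD⟩)
  have h2 := Submodule.finrank_lt_finrank_of_lt h1
  have h3 : C ⊓ D = C := Submodule.eq_of_le_of_finrank_le inf_le_left (by omega)
  have h4 : C ⊓ D = D := Submodule.eq_of_le_of_finrank_le inf_le_right (by omega)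
  rw [← h3, h4]

theorem pencil0 {A B : Submodule F (Fin 4 → F)} (h : A ≤ B)
    (hd : finrank F B = finrank F A + 2) :
    ∃ C : Option F → Submodule F (Fin 4 → F),
      (∀ i, A ≤ C i ∧ C i ≤ B ∧ finrank F (C i) = finrank F A + 1) ∧
      ∀ x ∈ B, x ∉ A → ∃! i, x ∈ C i := by
  have h1 : ∃ u ∈ B, u ∉ A := by
    by_contra hc
    push Not at hc
    have := Submodule.finrank_mono (show B ≤ A from hc)
    omega
  obtain ⟨u, huB, huA⟩ := h1
  obtain ⟨f, hfu, hfA⟩ := Submodule.exists_le_ker_of_notMem huA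
  have h2 : ∃ v ∈ B ⊓ LinearMap.ker f, v ∉ A := by
    by_contra hc
    push Not at hc
    have := Submodule.finrank_mono (show B ⊓ LinearMap.ker f ≤ A from hc)
    have := finrank_inf_ker B f
    omega
  obtain ⟨v, hvB, hvA⟩ := h2
  obtain ⟨g, hgv, hgA⟩ := Submodule.exists_le_ker_of_notMem hvA
  have l1 : B ⊓ LinearMap.ker f < B := by
    refine lt_of_le_of_ne inf_le_left fun hh => hfu ?_
    rw [← hh] at huB
    exact huB.2
  have l2 : B ⊓ LinearMap.ker f ⊓ LinearMap.ker g < B ⊓ LinearMap.ker f := by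
    refine lt_of_le_of_ne inf_le_left fun hh => hgv ?_
    rw [← hh] at hvB
    exact hvB.2
  have r1 := Submodule.finrank_lt_finrank_of_lt l1
  have r2 := Submodule.finrank_lt_finrank_of_lt l2
  have hA : A = B ⊓ LinearMap.ker f ⊓ LinearMap.ker g :=
    Submodule.eq_of_le_of_finrank_le (le_inf (le_inf h hfA) hgA) (by omega)
  have hAmem : ∀ x, x ∈ A ↔ x ∈ B ∧ f x = 0 ∧ g x = 0 := by
    intro x
    rw [hA]
    simp [and_assoc]
  let φ : Option F → ((Fin 4 → F) →ₗ[F] F) := fun i => i.elim f (fun c => g - c • f)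
  let ψ : Option F → ((Fin 4 → F) →ₗ[F] F) := fun i => i.elim g (fun _ => f)
  have key : ∀ i, A = B ⊓ LinearMap.ker (φ i) ⊓ LinearMap.ker (ψ i) := by
    intro i
    ext x
    rw [hAmem]
    cases i with
    | none => simp [φ, ψ, and_assoc]
    | some c =>
      simp only [φ, ψ, Option.elim_some, Submodule.mem_inf, LinearMap.mem_ker,
        LinearMap.sub_apply, LinearMap.smul_apply, smul_eq_mul]
      constructor
      · rintro ⟨a, b, c⟩
        simp [a, b, c]
      · rintro ⟨⟨a, b⟩, c⟩
        rw [c] at b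
        refine ⟨a, c, by simpa using b⟩
  refine ⟨fun i => B ⊓ LinearMap.ker (φ i), ?_, ?_⟩
  · intro i
    have a1 := finrank_inf_ker B (φ i)
    have a2 := finrank_inf_ker (B ⊓ LinearMap.ker (φ i)) (ψ i)
    rw [← key i] at a2
    refine ⟨?_, inf_le_left, ?_⟩
    · conv_lhs => rw [key i]
      exact inf_le_left
    · dsimp only
      omega
  · intro x hxB hxA
    rw [hAmem] at hxA
    by_cases hf : f x = 0
    · refine ⟨none, ⟨hxB, hf⟩, ?_⟩
      rintro (_ | c) ⟨_, hc⟩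
      · rfl
      · exfalso
        apply hxA
        simp [φ, hf] at hc
        exact ⟨hxB, hf, hc⟩
    · refine ⟨some (g x / f x), ⟨hxB, ?_⟩, ?_⟩
      · simp [φ, hf]
      · rintro (_ | c) ⟨_, hc⟩
        · exact absurd hc hf
        · simp [φ] at hc
          congr 1
          rw [eq_div_iff hf]
          exact (sub_eq_zero.mp hc).symm

theorem sub_le_iff (P : PGPoint F 3) (W : Submodule F (Fin 4 → F)) :
    P.submodule ≤ W ↔ P.rep ∈ W := by
  rw [Projectivization.submodule_eq, Submodule.span_singleton_le_iff_mem]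

theorem pt_finrank (P : PGPoint F 3) : finrank F P.submodule = 1 :=
  Projectivization.finrank_submodule P

theorem pt_eq {P Q : PGPoint F 3} (h : P.submodule ≤ Q.submodule) : P = Q := by
  apply Projectivization.submodule_injective
  exact Submodule.eq_of_le_of_finrank_le h (by rw [pt_finrank, pt_finrank])

theorem exists_pt {W : Submodule F (Fin 4 → F)} (h : 1 ≤ finrank F W) :
    ∃ P : PGPoint F 3, P.submodule ≤ W := by
  have : W ≠ ⊥ := by
    rintro rfl
    simp at h
  obtain ⟨v, hv, h0⟩ := Submodule.exists_mem_ne_zero_of_ne_bot this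
  refine ⟨Projectivization.mk F v h0, ?_⟩
  rw [Projectivization.submodule_mk, Submodule.span_singleton_le_iff_mem]
  exact hv

theorem pt_sup {P Q : PGPoint F 3} (h : P ≠ Q) :
    finrank F ↥(P.submodule ⊔ Q.submodule) = 2 := by
  have h1 := Submodule.finrank_sup_add_finrank_inf_eq P.submodule Q.submodule
  rw [pt_finrank, pt_finrank] at h1
  have h2 : P.submodule ⊓ Q.submodule < P.submodule := by
    refine lt_of_le_of_ne inf_le_left fun hh => h (pt_eq ?_)
    rw [← hh]
    exact inf_le_right
  have h3 := Submodule.finrank_lt_finrank_of_lt h2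
  rw [pt_finrank] at h3
  omega

theorem line_eq {P Q : PGPoint F 3} (h : P ≠ Q) {L M : Submodule F (Fin 4 → F)}
    (hL : finrank F L = 2) (hM : finrank F M = 2) (h1 : P.submodule ≤ L) (h2 : Q.submodule ≤ L)
    (h3 : P.submodule ≤ M) (h4 : Q.submodule ≤ M) : L = M := by
  have e1 := Submodule.eq_of_le_of_finrank_le (sup_le h1 h2) (by rw [pt_sup h, hL])
  have e2 := Submodule.eq_of_le_of_finrank_le (sup_le h3 h4) (by rw [pt_sup h, hM])
  rw [← e1, e2]

theorem cnt_mono (K : Finset (PGPoint F 3)) {A B : Submodule F (Fin 4 → F)} (h : A ≤ B) :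
    cnt K A ≤ cnt K B := by
  classical
  unfold cnt
  apply Finset.card_le_card
  intro P
  simp only [Finset.mem_filter]
  exact fun hh => ⟨hh.1, hh.2.trans h⟩

theorem cnt_pt_mem {K : Finset (PGPoint F 3)} {P : PGPoint F 3} (h : P ∈ K) :
    cnt K P.submodule = 1 := by
  classical
  unfold cnt
  rw [Finset.card_eq_one]
  refine ⟨P, ?_⟩
  ext Q
  simp only [Finset.mem_filter, Finset.mem_singleton]
  constructor
  · exact fun hh => pt_eq hh.2
  · rintro rfl
    exact ⟨h, le_rfl⟩

theorem cnt_pt_not_mem {K : Finset (PGPoint F 3)} {P : PGPoint F 3} (h : P ∉ K) :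
    cnt K P.submodule = 0 := by
  classical
  unfold cnt
  rw [Finset.card_eq_zero, Finset.filter_eq_empty_iff]
  intro Q hQ hh
  rw [pt_eq hh] at hQ
  exact h hQ

theorem cnt_pos {K : Finset (PGPoint F 3)} {W : Submodule F (Fin 4 → F)} (h : 0 < cnt K W) :
    ∃ P ∈ K, P.submodule ≤ W := by
  classical
  unfold cnt at h
  obtain ⟨P, hP⟩ := Finset.card_pos.mp h
  rw [Finset.mem_filter] at hP
  exact ⟨P, hP⟩

theorem pt_unique {K : Finset (PGPoint F 3)} {W : Submodule F (Fin 4 → F)} (h : cnt K W ≤ 1)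
    {P Q : PGPoint F 3} (hP : P ∈ K) (hQ : Q ∈ K) (h1 : P.submodule ≤ W) (h2 : Q.submodule ≤ W) :
    P = Q := by
  classical
  unfold cnt at h
  exact Finset.card_le_one.mp h P (by simp [hP, h1]) Q (by simp [hQ, h2])

theorem cnt_two {K : Finset (PGPoint F 3)} {W : Submodule F (Fin 4 → F)} (h : 2 ≤ cnt K W) :
    ∃ P ∈ K, ∃ Q ∈ K, P ≠ Q ∧ P.submodule ≤ W ∧ Q.submodule ≤ W := by
  classical
  unfold cnt at h
  obtain ⟨P, hP, Q, hQ, hPQ⟩ := Finset.one_lt_card.mp (show 1 < _ from h)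
  rw [Finset.mem_filter] at hP hQ
  exact ⟨P, hP.1, Q, hQ.1, hPQ, hP.2, hQ.2⟩

theorem cnt_top (K : Finset (PGPoint F 3)) : cnt K ⊤ = K.card := by
  classical
  unfold cnt
  simp

theorem pencil [Fintype F] {A B : Submodule F (Fin 4 → F)} (h : A ≤ B)
    (hd : finrank F B = finrank F A + 2) :
    ∃ C : Option F → Submodule F (Fin 4 → F),
      (∀ i, A ≤ C i ∧ C i ≤ B ∧ finrank F (C i) = finrank F A + 1) ∧
      (∀ D, A ≤ D → D ≤ B → finrank F D = finrank F A + 1 → ∃ i, C i = D) ∧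
      ∀ K : Finset (PGPoint F 3), cnt K B + Fintype.card F * cnt K A = ∑ i, cnt K (C i) := by
  classical
  obtain ⟨C, hC, hx⟩ := pencil0 h hd
  refine ⟨C, hC, ?_, ?_⟩
  · intro D hAD hDB hD
    have h1 : ∃ u ∈ D, u ∉ A := by
      by_contra hc
      push Not at hc
      have := Submodule.finrank_mono (show D ≤ A from hc)
      omega
    obtain ⟨u, huD, huA⟩ := h1
    obtain ⟨i, hi, -⟩ := hx u (hDB huD) huA
    exact ⟨i, sub_eq_of_mem (hC i).1 hAD (hC i).2.2 hD huA hi huD⟩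
  · intro K
    simp only [cnt, Finset.card_filter, sub_le_iff]
    rw [Finset.sum_comm, Finset.mul_sum, ← Finset.sum_add_distrib]
    refine Finset.sum_congr rfl fun P _ => ?_
    by_cases hA : P.rep ∈ A
    · have : ∀ i, P.rep ∈ C i := fun i => (hC i).1 hA
      simp [hA, this, h hA, add_comm]
    · by_cases hB : P.rep ∈ B
      · obtain ⟨i, hi, hu⟩ := hx _ hB hA
        have : ∀ j, P.rep ∈ C j ↔ j = i := fun j => ⟨hu j, fun e => e ▸ hi⟩
        simp only [this]
        simp [hA, hB]
      · have : ∀ j, P.rep ∉ C j := fun j hj => hB ((hC j).2.1 hj)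
        simp [hA, hB, this]

variable [Fintype F]

theorem card_opt_sum (f : Option F → ℕ) (m : ℕ) (h : ∀ i, f i ≤ m) :
    ∑ i, f i ≤ (Fintype.card F + 1) * m := by
  calc ∑ i, f i ≤ ∑ _i : Option F, m := Finset.sum_le_sum fun i _ => h i
    _ = _ := by simp

theorem bound_tangent {K : Finset (PGPoint F 3)} (hK : Cap2 K) {W L : Submodule F (Fin 4 → F)}
    (hW : finrank F W = 3) (hL : finrank F L = 2) (hLW : L ≤ W) (hc : cnt K L = 1) :
    cnt K W ≤ Fintype.card F + 1 := by
  obtain ⟨P, hP, hPL⟩ := cnt_pos (K := K) (W := L) (by omega)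
  obtain ⟨C, hC, hD, hS⟩ := pencil (hPL.trans hLW) (by rw [pt_finrank, hW])
  obtain ⟨i, hi⟩ := hD L hPL hLW (by rw [pt_finrank, hL])
  have h1 : ∑ i, cnt K (C i) < ∑ _i : Option F, 2 := by
    refine Finset.sum_lt_sum (fun j _ => hK _ ?_) ⟨i, Finset.mem_univ _, ?_⟩
    · rw [(hC j).2.2, pt_finrank]
    · rw [hi, hc]; norm_num
  rw [← hS K, cnt_pt_mem hP] at h1
  simp at h1
  omega

theorem no_tangent_plane {K : Finset (PGPoint F 3)} 
    (hK : ∀ W : Submodule F (Fin 4 → F), finrank F W = 2 → cnt K W = 0 ∨ cnt K W = 2)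
    {W : Submodule F (Fin 4 → F)}
    (hW : finrank F W = 3) : cnt K W = 0 ∨ cnt K W = Fintype.card F + 2 := by
  by_cases h0 : cnt K W = 0
  · exact Or.inl h0
  right
  obtain ⟨P, hP, hPW⟩ := cnt_pos (K := K) (W := W) (by omega)
  obtain ⟨C, hC, hD, hS⟩ := pencil hPW (by rw [pt_finrank, hW])
  have h1 : ∀ i, cnt K (C i) = 2 := by
    intro i
    have h2 := cnt_mono K (hC i).1
    rw [cnt_pt_mem hP] at h2
    have := hK (C i) (by rw [(hC i).2.2, pt_finrank])
    omega
  have := hS K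
  simp only [h1, cnt_pt_mem hP] at this
  simp at this
  omega

theorem line_card {L : Submodule F (Fin 4 → F)} (hL : finrank F L = 2)
    (U : Finset (PGPoint F 3)) (hU : ∀ P, P ∈ U) : cnt U L = Fintype.card F + 1 := by
  obtain ⟨C, hC, hD, hS⟩ := pencil (bot_le : ⊥ ≤ L) (by simp [hL])
  have hb : cnt U ⊥ = 0 := by
    by_contra hb
    obtain ⟨P, _, hP⟩ := cnt_pos (K := U) (W := ⊥) (by omega)
    have := Submodule.finrank_mono hP
    rw [pt_finrank] at this
    simp at this
  have h1 : ∀ i, cnt U (C i) = 1 := by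
    intro i
    have hr := (hC i).2.2
    rw [finrank_bot] at hr
    obtain ⟨P, hP⟩ := exists_pt (W := C i) (by omega)
    rw [← Submodule.eq_of_le_of_finrank_le hP (by rw [pt_finrank, hr])]
    exact cnt_pt_mem (hU P)
  have := hS U
  simp only [h1, hb] at this
  simpa using this

theorem exists_third {K : Finset (PGPoint F 3)} (hK : Cap2 K) (hq : 2 < Fintype.card F)
    {L : Submodule F (Fin 4 → F)} (hL : finrank F L = 2) : ∃ X, X ∉ K ∧ X.submodule ≤ L := by
  classical
  have : Finite (PGPoint F 3) := inferInstance
  have := Fintype.ofFinite (PGPoint F 3)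
  by_contra hc
  push Not at hc
  have h1 := line_card hL Finset.univ (by simp)
  have h2 : cnt Finset.univ L ≤ cnt K L := by
    unfold cnt
    apply Finset.card_le_card
    intro P
    simp only [Finset.mem_filter]
    intro hP
    refine ⟨?_, hP.2⟩
    by_contra hn
    exact hc P hn hP.2
  have := hK L hL
  omega

theorem no_tangent {K : Finset (PGPoint F 3)} (hq : 2 < Fintype.card F)
    (hK : ∀ W : Submodule F (Fin 4 → F), finrank F W = 2 → cnt K W = 0 ∨ cnt K W = 2)
    (h2 : 2 ≤ K.card) : False := by
  have hK2 : Cap2 K := fun W hW => by have := hK W hW; omega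
  rw [← cnt_top] at h2
  obtain ⟨P, hP, Q, hQ, hPQ, -, -⟩ := cnt_two h2
  set m := P.submodule ⊔ Q.submodule with hm
  have hm2 : finrank F m = 2 := pt_sup hPQ
  have hmc : cnt K m = 2 := by
    have := cnt_mono K (show P.submodule ≤ m from le_sup_left)
    rw [cnt_pt_mem hP] at this
    have := hK m hm2
    omega
  obtain ⟨C, hC, hD, hS⟩ := pencil (le_top : m ≤ ⊤) (by rw [hm2]; simp)
  have hp : ∀ i, cnt K (C i) = Fintype.card F + 2 := by
    intro i
    have h3 := no_tangent_plane hK (W := C i) (by rw [(hC i).2.2, hm2])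
    have := cnt_mono K (hC i).1
    omega
  have hk := hS K
  simp only [hp, hmc] at hk
  simp at hk
  -- external line
  obtain ⟨X, hX, hXm⟩ := exists_third hK2 hq hm2
  have hpl := (hC none).2.2
  rw [hm2] at hpl
  obtain ⟨D, hD1, hD2, hDS⟩ := pencil (hXm.trans (hC none).1) (by rw [pt_finrank, hpl])
  have hex : ∃ i, cnt K (D i) = 0 := by
    by_contra hc
    push Not at hc
    have h3 : ∀ i, cnt K (D i) = 2 := by
      intro i
      have := hK (D i) (by rw [(hD1 i).2.2, pt_finrank])
      have := hc i
      omega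
    have := hDS K
    simp only [h3, hp, cnt_pt_not_mem hX] at this
    simp at this
    omega
  obtain ⟨i, hi⟩ := hex
  have hr := (hD1 i).2.2
  rw [pt_finrank] at hr
  obtain ⟨E, hE, -, hES⟩ := pencil (le_top : D i ≤ ⊤) (by rw [hr]; simp)
  have hdvd : Fintype.card F + 2 ∣ ∑ j, cnt K (E j) := by
    refine Finset.dvd_sum fun j _ => ?_
    rcases no_tangent_plane hK (W := E j) (by rw [(hE j).2.2, hr]) with h | h <;> simp [h]
  rw [← hES K, hi, mul_zero, add_zero] at hdvd
  have h4 : Fintype.card F + 2 ∣ cnt K ⊤ + 2 * (Fintype.card F + 2) := 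
    dvd_add hdvd (Dvd.intro_left _ rfl)
  have h5 : cnt K ⊤ + 2 * (Fintype.card F + 2) = (Fintype.card F + 1) * (Fintype.card F + 2) + 4 := by
    omega
  rw [h5] at h4
  have h6 := (Nat.dvd_add_right (Dvd.intro_left _ rfl)).mp h4
  have := Nat.le_of_dvd (by norm_num) h6
  omega

theorem tangent_exists {K : Finset (PGPoint F 3)} (hK : Cap2 K) (he : Even (Fintype.card F))
    {W : Submodule F (Fin 4 → F)} (hW : finrank F W = 3) (hc : cnt K W = Fintype.card F + 1)
    {X : PGPoint F 3} (hX : X.submodule ≤ W) :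
    ∃ L ≤ W, finrank F L = 2 ∧ X.submodule ≤ L ∧ cnt K L = 1 := by
  obtain ⟨C, hC, hD, hS⟩ := pencil hX (by rw [pt_finrank, hW])
  have hr : ∀ i, finrank F (C i) = 2 := fun i => by rw [(hC i).2.2, pt_finrank]
  by_contra hn
  have hne : ∀ i, cnt K (C i) ≠ 1 := fun i hi => hn ⟨C i, (hC i).2.1, hr i, (hC i).1, hi⟩
  have hev : Even (∑ i, cnt K (C i)) := by
    refine Finset.even_sum _ fun i _ => ?_
    have := hne i
    have := hK _ (hr i)
    interval_cases h : cnt K (C i) <;> simp_all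
  rw [← hS K, hc] at hev
  obtain ⟨a, ha⟩ := he
  obtain ⟨b, hb⟩ := hev
  rw [ha, show a + a + 1 + (a + a) * cnt K X.submodule = 2 * (a + a * cnt K X.submodule) + 1 by ring] at hb
  omega

theorem tangent_unique {K : Finset (PGPoint F 3)} (hK : Cap2 K)
    {W : Submodule F (Fin 4 → F)} (hW : finrank F W = 3) (hc : cnt K W = Fintype.card F + 1)
    {X : PGPoint F 3} (hXK : X ∈ K) {L M : Submodule F (Fin 4 → F)}
    (hL : L ≤ W) (hM : M ≤ W) (hL2 : finrank F L = 2) (hM2 : finrank F M = 2)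
    (hXL : X.submodule ≤ L) (hXM : X.submodule ≤ M) (hL1 : cnt K L = 1) (hM1 : cnt K M = 1) :
    L = M := by
  classical
  obtain ⟨C, hC, hD, hS⟩ := pencil (hXL.trans hL) (by rw [pt_finrank, hW])
  have hr : ∀ i, finrank F (C i) = 2 := fun i => by rw [(hC i).2.2, pt_finrank]
  obtain ⟨i, rfl⟩ := hD L hXL hL (by rw [pt_finrank, hL2])
  obtain ⟨j, rfl⟩ := hD M hXM hM (by rw [pt_finrank, hM2])
  by_contra hne
  have hij : i ≠ j := fun h => hne (by rw [h])
  have hs := hS K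
  rw [← Finset.add_sum_erase _ _ (Finset.mem_univ i),
    ← Finset.add_sum_erase _ _ (show j ∈ Finset.univ.erase i by simp [hij.symm]),
    cnt_pt_mem hXK, hc, hL1, hM1] at hs
  have hle : ∑ x ∈ (Finset.univ.erase i).erase j, cnt K (C x)
      ≤ ∑ x ∈ (Finset.univ.erase i).erase j, 2 := Finset.sum_le_sum fun x _ => hK _ (hr x)
  have hcard : ((Finset.univ.erase i).erase j).card + 2 = Fintype.card F + 1 := by
    have e1 := Finset.card_erase_add_one (show j ∈ Finset.univ.erase i by simp [hij.symm])
    have e2 := Finset.card_erase_add_one (Finset.mem_univ i)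
    have e3 : (Finset.univ : Finset (Option F)).card = Fintype.card F + 1 := by simp
    omega
  rw [Finset.sum_const, smul_eq_mul] at hle
  omega

theorem nucleus {K : Finset (PGPoint F 3)} (hK : Cap2 K) (he : Even (Fintype.card F))
    {W : Submodule F (Fin 4 → F)} (hW : finrank F W = 3) (hc : cnt K W = Fintype.card F + 1) :
    ∃ N : PGPoint F 3, N.submodule ≤ W ∧ N ∉ K ∧
      ∀ L ≤ W, finrank F L = 2 → N.submodule ≤ L → cnt K L = 1 := by
  classical
  have hpos : 0 < Fintype.card F := Fintype.card_pos
  have : Finite (PGPoint F 3) := inferInstance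
  have := Fintype.ofFinite (PGPoint F 3)
  obtain ⟨P, hP, Q, hQ, hPQ, hPW, hQW⟩ := cnt_two (K := K) (W := W) (by omega)
  obtain ⟨l, hlW, hl2, hPl, hl1⟩ := tangent_exists hK he hW hc hPW
  obtain ⟨m, hmW, hm2, hQm, hm1⟩ := tangent_exists hK he hW hc hQW
  have hinf : 1 ≤ finrank F ↥(l ⊓ m) := by
    have h1 := Submodule.finrank_sup_add_finrank_inf_eq l m
    have h2 := Submodule.finrank_mono (sup_le hlW hmW)
    omega
  obtain ⟨N, hN⟩ := exists_pt hinf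
  have hNl := hN.trans inf_le_left
  have hNm := hN.trans inf_le_right
  have hNK : N ∉ K := by
    intro hNK
    exact hPQ ((pt_unique hl1.le hP hNK hPl hNl).trans (pt_unique hm1.le hNK hQ hNm hQm))
  have hle : ∀ L ≤ W, finrank F L = 2 → N.submodule ≤ L → cnt K L ≤ 1 := by
    intro s hsW hs2 hNs
    by_contra hcs
    have hsc : cnt K s ≠ 1 := by omega
    have hcard := line_card hs2 Finset.univ (by simp)
    have hex : ∀ X : PGPoint F 3, ∃ T : PGPoint F 3, X.submodule ≤ s → 
        T ∈ K ∧ ∃ L ≤ W, finrank F L = 2 ∧ X.submodule ≤ L ∧ T.submodule ≤ L ∧ cnt K L = 1 := by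
      intro X
      by_cases hX : X.submodule ≤ s
      · obtain ⟨L, a, b, c, d⟩ := tangent_exists hK he hW hc (hX.trans hsW)
        obtain ⟨T, hT, hTL⟩ := cnt_pos (K := K) (W := L) (by omega)
        exact ⟨T, fun _ => ⟨hT, L, a, b, c, hTL, d⟩⟩
      · exact ⟨X, fun h => absurd h hX⟩
    choose g hg using hex
    have hmap : Set.MapsTo g (Finset.univ.filter (fun P : PGPoint F 3 => P.submodule ≤ s))
        (K.filter (fun P => P.submodule ≤ W)) := by
      intro X hX
      simp at hX
      obtain ⟨h1, L, a, b, c, d, e⟩ := hg X hX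
      simp only [Finset.coe_filter, Set.mem_ofPred_eq]
      exact ⟨h1, d.trans a⟩
    have hinj : Set.InjOn g (Finset.univ.filter (fun P : PGPoint F 3 => P.submodule ≤ s)) := by
      intro X hX Y hY hXY
      simp at hX hY
      obtain ⟨h1, L, a, b, c, d, e⟩ := hg X hX
      obtain ⟨h1', L', a', b', c', d', e'⟩ := hg Y hY
      rw [← hXY] at d'
      have := tangent_unique hK hW hc h1 a a' b b' d d' e e'
      subst this
      by_contra hne
      have := line_eq hne b hs2 c c' hX hY
      subst this
      exact hsc e
    have hsurj := Finset.surjOn_of_injOn_of_card_le g hmap hinj (by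
      unfold cnt at hc hcard
      rw [hc, hcard])
    have fin : ∀ R ∈ K, ∀ l ≤ W, finrank F l = 2 → R.submodule ≤ l → N.submodule ≤ l → 
        cnt K l = 1 → g N = R := by
      intro R hR l hlW hl2 hRl hNl hl1
      obtain ⟨X, hX, hXR⟩ := hsurj (show R ∈ _ by 
        simp only [Finset.coe_filter, Set.mem_ofPred_eq]
        exact ⟨hR, hRl.trans hlW⟩)
      simp at hX
      obtain ⟨h1, L, a, b, c, d, e⟩ := hg X hX
      rw [hXR] at d
      have := tangent_unique hK hW hc hR a hlW b hl2 d hRl e hl1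
      subst this
      have : X = N := by
        by_contra hne
        have := line_eq hne b hs2 c hNl hX hNs
        subst this
        exact hsc e
      rw [← this, hXR]
    exact hPQ ((fin P hP l hlW hl2 hPl hNl hl1).symm.trans (fin Q hQ m hmW hm2 hQm hNm hm1))
  refine ⟨N, hNl.trans hlW, hNK, ?_⟩
  intro L hLW hL2 hNL
  obtain ⟨C, hC, hD, hS⟩ := pencil (hNL.trans hLW) (by rw [pt_finrank, hW])
  obtain ⟨i, rfl⟩ := hD L hNL hLW (by rw [pt_finrank, hL2])
  have hr : ∀ i, finrank F (C i) = 2 := fun i => by rw [(hC i).2.2, pt_finrank]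
  have h1 : ∀ i, cnt K (C i) ≤ 1 := fun i => hle _ (hC i).2.1 (hr i) (hC i).1
  by_contra hne
  have hlt : ∑ i, cnt K (C i) < ∑ _i : Option F, 1 :=
    Finset.sum_lt_sum (fun j _ => h1 j) ⟨i, Finset.mem_univ _, lt_of_le_of_ne (h1 i) hne⟩
  rw [← hS K, cnt_pt_not_mem hNK, hc] at hlt
  simp at hlt

theorem extend {K : Finset (PGPoint F 3)} (hK : Cap2 K) (he : Even (Fintype.card F))
    (hk : Fintype.card F ^ 2 + 2 ≤ K.card) {l : Submodule F (Fin 4 → F)}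
    (hl2 : finrank F l = 2) (hl1 : cnt K l = 1) :
    ∃ K' : Finset (PGPoint F 3), Cap2 K' ∧ K.card < K'.card := by
  classical
  obtain ⟨C, hC, -, hS⟩ := pencil (le_top : l ≤ ⊤) (by rw [hl2]; simp)
  have hr : ∀ i, finrank F (C i) = 3 := fun i => by rw [(hC i).2.2, hl2]
  have hb : ∀ i, cnt K (C i) ≤ Fintype.card F + 1 := fun i =>
    bound_tangent hK (hr i) hl2 (hC i).1 hl1
  have hex : ∃ i, cnt K (C i) = Fintype.card F + 1 := by
    by_contra hn
    push Not at hn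
    have := card_opt_sum (fun i => cnt K (C i)) (Fintype.card F) (fun i => by
      have := hn i
      have := hb i
      omega)
    rw [← hS K, hl1, cnt_top] at this
    nlinarith
  obtain ⟨i, hi⟩ := hex
  obtain ⟨N, hNW, hNK, hN⟩ := nucleus hK he (hr i) hi
  refine ⟨insert N K, ?_, by rw [Finset.card_insert_of_notMem hNK]; omega⟩
  intro s hs2
  by_cases hNs : N.submodule ≤ s
  · have hs1 : cnt K s ≤ 1 := by
      by_contra hcs
      have hs : cnt K s = 2 := by
        have := hK s hs2
        omega
      obtain ⟨D, hD, -, hDS⟩ := pencil (le_top : s ≤ ⊤) (by rw [hs2]; simp)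
      have hDr : ∀ i, finrank F (D i) = 3 := fun i => by rw [(hD i).2.2, hs2]
      have := card_opt_sum (fun i => cnt K (D i)) (Fintype.card F + 1) (fun j => by
        have hND : N.submodule ≤ D j := hNs.trans (hD j).1
        have h2 : 2 ≤ finrank F ↥(C i ⊓ D j) := by
          have h1 := Submodule.finrank_sup_add_finrank_inf_eq (C i) (D j)
          have h2 := Submodule.finrank_le (C i ⊔ D j)
          simp only [finrank_fin_fun] at h2
          have := hr i
          have := hDr j
          omega
        have h3 : ∃ R : PGPoint F 3, R.submodule ≤ C i ⊓ D j ∧ R ≠ N := by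
          by_contra hcon
          push Not at hcon
          have : C i ⊓ D j ≤ N.submodule := by
            intro x hx
            by_cases hx0 : x = 0
            · rw [hx0]; exact zero_mem _
            · have := hcon (Projectivization.mk F x hx0) (by
                rw [Projectivization.submodule_mk, Submodule.span_singleton_le_iff_mem]
                exact hx)
              rw [← this, Projectivization.submodule_mk]
              exact Submodule.mem_span_singleton_self x
          have := Submodule.finrank_mono this
          rw [pt_finrank] at this
          omega
        obtain ⟨R, hR, hRN⟩ := h3
        have ht : N.submodule ⊔ R.submodule ≤ C i := sup_le hNW (hR.trans inf_le_left)
        exact bound_tangent hK (hDr j) (pt_sup hRN.symm) (sup_le hND (hR.trans inf_le_right))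
          (hN _ ht (pt_sup hRN.symm) le_sup_left))
      rw [← hDS K, hs, cnt_top] at this
      nlinarith
    have : cnt (insert N K) s ≤ cnt K s + 1 := by
      unfold cnt
      rw [Finset.filter_insert]
      simp only [hNs, if_true]
      exact Finset.card_insert_le _ _
    omega
  · have : cnt (insert N K) s = cnt K s := by
      unfold cnt
      rw [Finset.filter_insert]
      simp only [hNs, if_false]
    rw [this]
    exact hK s hs2

theorem cap2_bound {K : Finset (PGPoint F 3)} (hK : Cap2 K) (he : Even (Fintype.card F))
    (hq : 2 < Fintype.card F) : K.card ≤ Fintype.card F ^ 2 + 1 := by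
  classical
  have : Finite (PGPoint F 3) := inferInstance
  have := Fintype.ofFinite (PGPoint F 3)
  obtain ⟨M, hM, hmax⟩ := Finset.exists_max_image
    ((Finset.univ : Finset (Finset (PGPoint F 3))).filter Cap2) Finset.card ⟨K, by simp [hK]⟩
  simp only [Finset.mem_filter, Finset.mem_univ, true_and] at hM hmax
  by_contra hcon
  have hMc : Fintype.card F ^ 2 + 2 ≤ M.card := by
    have := hmax K hK
    omega
  refine no_tangent (K := M) hq ?_ (by omega)
  intro W hW
  have h1 := hM W hW
  have h2 : cnt M W ≠ 1 := by
    intro h1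
    obtain ⟨K', hK', hlt⟩ := extend hM he hMc hW h1
    have := hmax K' hK'
    omega
  omega


theorem cap2_of_isCap {K : Finset (PGPoint F 3)} (hK : IsCap (K : Set (PGPoint F 3))) :
    Cap2 K := by
  classical
  intro W hW
  by_contra hcon
  unfold cnt at hcon
  obtain ⟨P, Q, R, hP, hQ, hR, h1, h2, h3⟩ := Finset.two_lt_card_iff.mp (not_le.mp hcon)
  rw [Finset.mem_filter] at hP hQ hR
  refine hK P hP.1 Q hQ.1 R hR.1 h1 h2 h3 ?_
  unfold Coll3
  rw [← hW]
  exact Submodule.finrank_mono (sup_le (sup_le hP.2 hQ.2) hR.2)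

/-- The elliptic quadric form. -/
def ovF (d x y : F) : F := x ^ 2 + x * y - d * y ^ 2

def ovV (d : F) : Option (F × F) → (Fin 4 → F)
  | none => ![0, 0, 0, 1]
  | some p => ![1, p.1, p.2, ovF d p.1 p.2]

def ovQ (d : F) (v : Fin 4 → F) : F := v 0 * v 3 - ovF d (v 1) (v 2)

def ovB (d : F) (u v : Fin 4 → F) : F :=
  u 0 * v 3 + v 0 * u 3 - (2 * u 1 * v 1 + u 1 * v 2 + v 1 * u 2 - 2 * d * u 2 * v 2)

theorem ov_add (d a b : F) (u v : Fin 4 → F) (hu : ovQ d u = 0) (hv : ovQ d v = 0) :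
    ovQ d (a • u + b • v) = a * b * ovB d u v := by
  unfold ovQ ovB ovF at *
  simp only [Pi.add_apply, Pi.smul_apply, smul_eq_mul]
  linear_combination a ^ 2 * hu + b ^ 2 * hv

theorem ov_smul (d a : F) (u : Fin 4 → F) (hu : ovQ d u = 0) : ovQ d (a • u) = 0 := by
  unfold ovQ ovF at *
  simp only [Pi.smul_apply, smul_eq_mul]
  linear_combination a ^ 2 * hu

theorem ov_sing (d : F) (i) : ovQ d (ovV d i) = 0 := by
  cases i <;> simp [ovQ, ovV, ovF]

theorem ovF_ne (d : F) (hd : ∀ t : F, t ^ 2 + t ≠ d) (x y : F) (h : ovF d x y = 0) :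
    x = 0 ∧ y = 0 := by
  unfold ovF at h
  by_cases hy : y = 0
  · subst hy
    simpa using h
  · exfalso
    apply hd (x / y)
    field_simp
    linear_combination h

theorem ovB_ne (d : F) (hd : ∀ t : F, t ^ 2 + t ≠ d) {i j} (hij : i ≠ j) :
    ovB d (ovV d i) (ovV d j) ≠ 0 := by
  rcases i with _ | ⟨x, y⟩ <;> rcases j with _ | ⟨z, w⟩
  · exact absurd rfl hij
  · simp [ovB, ovV]
  · simp [ovB, ovV]
  · intro h
    have h2 : ovF d (x - z) (y - w) = 0 := by
      simp [ovB, ovV, ovF] at h ⊢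
      linear_combination h
    obtain ⟨h3, h4⟩ := ovF_ne d hd _ _ h2
    exact hij (by rw [sub_eq_zero.mp h3, sub_eq_zero.mp h4])

theorem ovV_ne (d : F) (i) : ovV d i ≠ 0 := by
  intro h
  cases i with
  | none => simpa [ovV] using congrFun h 3
  | some p => simpa [ovV] using congrFun h 0

theorem ov_pair (d : F) (hd : ∀ t : F, t ^ 2 + t ≠ d) {i j} (hij : i ≠ j) (k) (a b c : F)
    (h : a • ovV d i + b • ovV d j + c • ovV d k = 0) : a = 0 ∨ b = 0 := by
  have h1 : a • ovV d i + b • ovV d j = (-c) • ovV d k := by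
    rw [neg_smul]
    exact eq_neg_of_add_eq_zero_left h
  have h2 := ov_add d a b _ _ (ov_sing d i) (ov_sing d j)
  rw [h1, ov_smul _ _ _ (ov_sing d k)] at h2
  have := ovB_ne d hd hij
  simpa [this] using h2.symm

theorem ov_indep (d : F) (hd : ∀ t : F, t ^ 2 + t ≠ d) {i j k} (hij : i ≠ j) (hik : i ≠ k)
    (hjk : j ≠ k) : LinearIndependent F ![ovV d i, ovV d j, ovV d k] := by
  rw [Fintype.linearIndependent_iff]
  intro g hg
  simp only [Fin.sum_univ_three, Matrix.cons_val_zero, Matrix.cons_val_one, Matrix.cons_val] at hg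
  have h1 := ov_pair d hd hij k _ _ _ hg
  have h2 := ov_pair d hd hik j (g 0) (g 2) (g 1) (by rw [← hg]; abel)
  have h3 := ov_pair d hd hjk i (g 1) (g 2) (g 0) (by rw [← hg]; abel)
  have n1 := ovV_ne d i
  have n2 := ovV_ne d j
  have n3 := ovV_ne d k
  have hz : g 0 = 0 ∧ g 1 = 0 ∧ g 2 = 0 := by
    rcases h1 with h1 | h1 <;> rcases h2 with h2 | h2 <;> rcases h3 with h3 | h3 <;>
      simp_all
  intro l
  fin_cases l
  exacts [hz.1, hz.2.1, hz.2.2]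

end

theorem stmt15 (F : Type*) [Field F] [Fintype F] (q : ℕ) (hcard : Fintype.card F = q)
    (hqeven : Even q) (hq : 2 < q) :
    (∀ K : Set (PGPoint F 3), IsCap K → K.ncard ≤ q ^ 2 + 1) ∧
    (∃ K : Set (PGPoint F 3), IsCap K ∧ K.ncard = q ^ 2 + 1) := by
  classical
  subst hcard
  have : Finite (PGPoint F 3) := inferInstance
  constructor
  · intro K hK
    obtain ⟨K', rfl⟩ := (Set.toFinite K).exists_finset_coe
    rw [Set.ncard_coe_finset]
    exact cap2_bound (cap2_of_isCap hK) hqeven hq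
  · have hd : ∃ d : F, ∀ t : F, t ^ 2 + t ≠ d := by
      by_contra hc
      push Not at hc
      have hs : Function.Surjective (fun t : F => t ^ 2 + t) := hc
      have hi := Finite.injective_iff_surjective.mpr hs
      have : (0 : F) = -1 := hi (by simp)
      simp at this
    obtain ⟨d, hd⟩ := hd
    let p : Option (F × F) → PGPoint F 3 := fun i => Projectivization.mk F (ovV d i) (ovV_ne d i)
    have hp : Function.Injective p := by
      intro i j hij
      by_contra hne
      obtain ⟨a, ha⟩ := (Projectivization.mk_eq_mk_iff' F _ _ _ _).mp hij
      rcases ov_pair d hd hne i 1 (-a) 0 (by simp [ha]) with h | h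
      · simp at h
      · have : a = 0 := by simpa using h
        rw [this, zero_smul] at ha
        exact ovV_ne d i ha.symm
    refine ⟨Set.range p, ?_, ?_⟩
    · rintro _ ⟨i, rfl⟩ _ ⟨j, rfl⟩ _ ⟨k, rfl⟩ h1 h2 h3 hc
      have hind := ov_indep d hd (fun h => h1 (congrArg p h)) (fun h => h2 (congrArg p h))
        (fun h => h3 (congrArg p h))
      have hr := finrank_span_eq_card hind
      unfold Coll3 at hc
      have hset : Set.range ![ovV d i, ovV d j, ovV d k] = {ovV d i} ∪ {ovV d j} ∪ {ovV d k} := by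
        simp only [Matrix.range_cons, Matrix.range_empty, Set.union_empty, Set.union_assoc]
      have hle : Submodule.span F (Set.range ![ovV d i, ovV d j, ovV d k]) ≤
          (p i).submodule ⊔ (p j).submodule ⊔ (p k).submodule := by
        rw [hset, Submodule.span_union, Submodule.span_union]
        exact le_of_eq rfl
      have hm := Submodule.finrank_mono hle
      simp only [Fintype.card_fin] at hr
      rw [hr] at hm
      have hh := hm.trans hc
      omega
    · rw [← Set.image_univ, Set.ncard_image_of_injective _ hp, Set.ncard_univ]
      simp [Nat.card_eq_fintype_card, sq]
end

section
/- Let q be an even prime power. Then the maximum value of k for which a k-arc exists in PG(2, q) is q + 2; that is, every k-arc in PG(2, q) satisfies k ≤ q + 2, and there exists a (q + 2)-arc in PG(2, q). -/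
open Module

theorem arc_upper {F : Type*} [Field F] [Fintype F] (K : Set (PGPoint F 2)) (hK : IsCap K) :
    K.ncard ≤ Fintype.card F + 2 := by
  classical
  rcases K.eq_empty_or_nonempty with rfl | ⟨P, hP⟩
  · simp
  have hfin : Finite (PGPoint F 2) := by infer_instance
  let W := (Fin (2 + 1) → F) ⧸ P.submodule
  have hW : finrank F W = 2 := by
    have h := Submodule.finrank_quotient_add_finrank P.submodule
    rw [P.finrank_submodule] at h
    simp at h
    exact h
  have hne : ∀ Q : PGPoint F 2, Q ≠ P → P.submodule.mkQ Q.rep ≠ 0 := by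
    intro Q hQ h0
    apply hQ
    rw [Submodule.mkQ_apply, Submodule.Quotient.mk_eq_zero] at h0
    apply Projectivization.submodule_injective
    apply Submodule.eq_of_le_of_finrank_eq
    · rw [Q.submodule_eq, Submodule.span_singleton_le_iff_mem]; exact h0
    · rw [Q.finrank_submodule, P.finrank_submodule]
  have hcard := Projectivization.card_of_finrank_two F W hW
  have hfW : Finite (Projectivization F W) := by
    apply Nat.finite_of_card_ne_zero; omega
  let g : ↥(K \ {P}) → Projectivization F W := fun Q => Projectivization.mk F _ (hne Q.1 Q.2.2)
  have hg : Function.Injective g := by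
    intro Q R h
    by_contra hQR
    have hQR' : Q.1 ≠ R.1 := fun h => hQR (Subtype.ext h)
    obtain ⟨a, ha⟩ := (Projectivization.mk_eq_mk_iff' _ _ _ _ _).1 h
    refine hK P hP Q.1 Q.2.1 R.1 R.2.1 (Ne.symm Q.2.2) (Ne.symm R.2.2) hQR' ?_
    have hle : Q.1.submodule ≤ P.submodule ⊔ R.1.submodule := by
      rw [Q.1.submodule_eq, Submodule.span_singleton_le_iff_mem]
      rw [← map_smul, Submodule.mkQ_apply, Submodule.mkQ_apply, eq_comm,
        Submodule.Quotient.eq] at ha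
      have : Q.1.rep = (Q.1.rep - a • R.1.rep) + a • R.1.rep := by abel
      rw [this]
      refine Submodule.add_mem_sup ha (Submodule.smul_mem _ _ ?_)
      rw [R.1.submodule_eq]
      exact Submodule.mem_span_singleton_self _
    unfold Coll3
    have : P.submodule ⊔ Q.1.submodule ⊔ R.1.submodule = P.submodule ⊔ R.1.submodule := by
      apply le_antisymm
      · exact sup_le (sup_le le_sup_left hle) le_sup_right
      · exact sup_le (le_sup_left.trans le_sup_left) le_sup_right
    rw [this]
    have := Submodule.finrank_add_le_finrank_add_finrank P.submodule R.1.submodule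
    rw [P.finrank_submodule, R.1.finrank_submodule] at this
    exact this
  have h1 := Nat.card_le_card_of_injective g hg
  rw [hcard, Nat.card_coe_set_eq, Nat.card_eq_fintype_card] at h1
  have := Set.ncard_diff_singleton_add_one hP K.toFinite
  omega

theorem not_coll3_of_det {F : Type*} [Field F] (u v w : Fin 3 → F) (hu : u ≠ 0) (hv : v ≠ 0)
    (hw : w ≠ 0) (h : (Matrix.of ![u, v, w]).det ≠ 0) :
    ¬ Coll3 (n := 2) (Projectivization.mk F u hu) (Projectivization.mk F v hv)
      (Projectivization.mk F w hw) := by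
  unfold Coll3
  have hli : LinearIndependent F ![u, v, w] :=
    Matrix.linearIndependent_rows_of_det_ne_zero h
  have h3 := finrank_span_eq_card hli
  have : Submodule.span F (Set.range ![u, v, w]) =
      (F ∙ u) ⊔ (F ∙ v) ⊔ (F ∙ w) := by
    rw [← Submodule.span_union, ← Submodule.span_union]
    congr 1
    ext x
    simp [Matrix.range_cons, or_comm, or_left_comm, or_assoc]
  rw [this] at h3
  rw [Projectivization.submodule_mk, Projectivization.submodule_mk, Projectivization.submodule_mk]
  simp only [Fintype.card_fin] at h3
  erw [h3]
  decide

/-- Vectors of the regular hyperoval. -/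
def hypVec {F : Type*} [Field F] : Option (Option F) → (Fin 3 → F)
  | none => ![0, 1, 0]
  | some none => ![0, 0, 1]
  | some (some t) => ![1, t, t ^ 2]

theorem hypVec_ne {F : Type*} [Field F] (a : Option (Option F)) : hypVec a ≠ 0 := by
  rcases a with _ | _ | t
  · intro h; simpa [hypVec] using congrFun h 1
  · intro h; simpa [hypVec] using congrFun h 2
  · intro h; simpa [hypVec] using congrFun h 0

theorem hypVec_det {F : Type*} [Field F] [CharP F 2] (a b c : Option (Option F))
    (hab : a ≠ b) (hac : a ≠ c) (hbc : b ≠ c) :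
    (Matrix.of ![hypVec a, hypVec b, hypVec c]).det ≠ 0 := by
  have key : ∀ s t : F, s ≠ t → s ^ 2 - t ^ 2 ≠ 0 := by
    intro s t hst h
    rw [← sub_pow_char s t] at h
    exact hst (sub_eq_zero.1 (pow_eq_zero_iff (by norm_num) |>.1 h))
  rcases a with _ | _ | r <;> rcases b with _ | _ | s <;> rcases c with _ | _ | t <;>
    simp [hypVec, Matrix.det_fin_three] at hab hac hbc ⊢
  · have := key s t hbc; grind
  · grind
  · have := key r t hac; grind
  · grind
  · have := key r s hab; grind
  · grind
  · intro h
    have : (r - s) * (r - t) * (s - t) = 0 := by linear_combination -h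
    simp [sub_eq_zero, hab, hac, hbc] at this

theorem hypVec_inj {F : Type*} [Field F] : Function.Injective
    (fun a : Option (Option F) => (Projectivization.mk F (hypVec a) (hypVec_ne a) : PGPoint F 2)) := by
  intro a b h
  obtain ⟨x, hx⟩ := (Projectivization.mk_eq_mk_iff' _ _ _ _ _).1 h
  have h0 := congrFun hx 0
  have h1 := congrFun hx 1
  have h2 := congrFun hx 2
  rcases a with _ | _ | r <;> rcases b with _ | _ | s <;>
    simp [hypVec] at h0 h1 h2 ⊢ <;> grind

theorem stmt16 (F : Type*) [Field F] [Fintype F] (q : ℕ) (hcard : Fintype.card F = q)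
    (hqeven : Even q) :
    (∀ K : Set (PGPoint F 2), IsCap K → K.ncard ≤ q + 2) ∧
    (∃ K : Set (PGPoint F 2), IsCap K ∧ K.ncard = q + 2) := by
  subst hcard
  refine ⟨fun K hK => arc_upper K hK, ?_⟩
  have hchar : CharP F 2 := by
    have : ringChar F = 2 := FiniteField.even_card_iff_char_two.2 (Nat.even_iff.1 hqeven)
    exact ringChar.of_eq this
  refine ⟨Set.range (fun a : Option (Option F) =>
    (Projectivization.mk F (hypVec a) (hypVec_ne a) : PGPoint F 2)), ?_, ?_⟩
  · rintro _ ⟨a, rfl⟩ _ ⟨b, rfl⟩ _ ⟨c, rfl⟩ hab hac hbc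
    apply not_coll3_of_det
    apply hypVec_det
    · rintro rfl; exact hab rfl
    · rintro rfl; exact hac rfl
    · rintro rfl; exact hbc rfl
  · rw [← Set.image_univ, Set.ncard_image_of_injective _ hypVec_inj, Set.ncard_univ]
    simp
end

section
/- For every n ≥ 3, the maximum value of k for which a k-cap exists in PG(n, 2) is 2ⁿ; that is, every k-cap in PG(n, 2) satisfies k ≤ 2ⁿ, and there exists a 2ⁿ-cap in PG(n, 2). -/
open Module

theorem two_cases {F : Type*} [Field F] [Fintype F] (hcard : Fintype.card F = 2) (x : F) :
    x = 0 ∨ x = 1 := by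
  classical
  have h : ({0, 1} : Finset F) = Finset.univ := by
    apply Finset.eq_univ_of_card
    rw [hcard, Finset.card_pair zero_ne_one]
  have := Finset.mem_univ x
  rw [← h] at this
  simpa using this

theorem two_char {F : Type*} [Field F] [Fintype F] (hcard : Fintype.card F = 2) :
    (1 : F) + 1 = 0 := by
  rcases two_cases hcard ((1 : F) + 1) with h | h
  · exact h
  · exact absurd (by simpa using h) (one_ne_zero (α := F))

theorem coll_of_add {F : Type*} [Field F] {n : ℕ} (P Q R : PGPoint F n)
    (h : R.rep = P.rep + Q.rep) : Coll3 P Q R := by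
  unfold Coll3
  have hle : R.submodule ≤ P.submodule ⊔ Q.submodule := by
    rw [R.submodule_eq, P.submodule_eq, Q.submodule_eq, Submodule.span_singleton_le_iff_mem, h]
    exact Submodule.add_mem_sup (Submodule.mem_span_singleton_self _)
      (Submodule.mem_span_singleton_self _)
  rw [sup_eq_left.mpr hle]
  refine (Submodule.finrank_add_le_finrank_add_finrank _ _).trans ?_
  rw [P.finrank_submodule, Q.finrank_submodule]

theorem cap_upper {F : Type*} [Field F] [Fintype F] (hcard : Fintype.card F = 2)
    (n : ℕ) (K : Set (PGPoint F n)) (hK : IsCap K) : K.ncard ≤ 2 ^ n := by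
  classical
  rcases K.eq_empty_or_nonempty with rfl | ⟨P, hP⟩
  · simp
  have h2 : ∀ v : Fin (n + 1) → F, v + v = 0 := by
    intro v
    have : ((1 : F) + 1) • v = 0 := by rw [two_char hcard, zero_smul]
    simpa [add_smul] using this
  have hinj : Function.Injective (fun Q : PGPoint F n => Q.rep) := by
    intro A B h
    have h : A.rep = B.rep := h
    rw [← A.mk_rep, ← B.mk_rep]
    simp only [h]
  set S : Set (Fin (n + 1) → F) := (fun Q : PGPoint F n => Q.rep) '' K with hS
  have hSc : S.ncard = K.ncard := Set.ncard_image_of_injective K hinj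
  have hTc : ((fun x => x + P.rep) '' S).ncard = K.ncard := by
    rw [Set.ncard_image_of_injective S (add_left_injective P.rep), hSc]
  have hd : Disjoint S ((fun x => x + P.rep) '' S) := by
    rw [Set.disjoint_left]
    rintro _ ⟨A, hA, rfl⟩ ⟨_, ⟨B, hB, rfl⟩, h⟩
    have h : B.rep + P.rep = A.rep := h
    refine hK B hB P hP A hA ?_ ?_ ?_ (coll_of_add B P A h.symm)
    · rintro rfl
      exact A.rep_nonzero (by rw [← h, h2])
    · rintro rfl
      exact P.rep_nonzero (by simpa using h)
    · rintro rfl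
      exact B.rep_nonzero (by simpa using h)
  have hu := Set.ncard_union_eq hd (Set.toFinite _) (Set.toFinite _)
  have hle := Set.ncard_le_card (S ∪ ((fun x => x + P.rep) '' S))
  rw [hu, hSc, hTc, Nat.card_eq_fintype_card, Fintype.card_fun, hcard, Fintype.card_fin,
    pow_succ] at hle
  omega

theorem cons_ne {F : Type*} [Field F] {n : ℕ} (w : Fin n → F) :
    (Fin.cons 1 w : Fin (n + 1) → F) ≠ 0 := by
  intro h
  have := congrFun h 0
  simp at this

/-- The affine point with coordinates `(1, w)`. -/
def affPt (F : Type*) [Field F] (n : ℕ) (w : Fin n → F) : PGPoint F n :=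
  Projectivization.mk F (Fin.cons 1 w) (cons_ne w)

theorem affPt_inj (F : Type*) [Field F] (n : ℕ) : Function.Injective (affPt F n) := by
  intro v w h
  unfold affPt at h
  rw [Projectivization.mk_eq_mk_iff'] at h
  obtain ⟨a, ha⟩ := h
  have h0 := congrFun ha 0
  simp at h0
  subst h0
  rw [one_smul] at ha
  exact (Fin.cons_right_injective _ ha).symm

theorem affPt_cap {F : Type*} [Field F] [Fintype F] (hcard : Fintype.card F = 2) (n : ℕ) :
    IsCap (Set.range (affPt F n)) := by
  rintro _ ⟨a, rfl⟩ _ ⟨b, rfl⟩ _ ⟨c, rfl⟩ hab hac hbc hcol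
  have hab : a ≠ b := fun h => hab (by rw [h])
  have hac : a ≠ c := fun h => hac (by rw [h])
  have hbc : b ≠ c := fun h => hbc (by rw [h])
  have h11 := two_char hcard
  have key : ∀ v w : Fin n → F, v + w = 0 → v = w := by
    intro v w h
    have h2 : w + w = 0 := by
      have : ((1 : F) + 1) • w = 0 := by rw [h11, zero_smul]
      simpa [add_smul] using this
    exact add_right_cancel (h.trans h2.symm)
  have hli : LinearIndependent F
      ![(Fin.cons 1 a : Fin (n + 1) → F), Fin.cons 1 b, Fin.cons 1 c] := by
    rw [Fintype.linearIndependent_iff]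
    intro g hg
    simp only [Fin.sum_univ_three, Matrix.cons_val_zero, Matrix.cons_val_one,
      Matrix.cons_val] at hg
    have h0 : g 0 + g 1 + g 2 = 0 := by simpa using congrFun hg 0
    have ht : g 0 • a + g 1 • b + g 2 • c = 0 := by
      funext i
      simpa using congrFun hg i.succ
    have : g 0 = 0 ∧ g 1 = 0 ∧ g 2 = 0 := by
      rcases two_cases hcard (g 0) with h | h <;> rcases two_cases hcard (g 1) with h' | h' <;>
        rcases two_cases hcard (g 2) with h'' | h'' <;> rw [h, h', h''] at h0 ht <;>
        simp [h11] at h0 ht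
      · exact ⟨h, h', h''⟩
      · exact absurd (key _ _ ht) hbc
      · exact absurd (key _ _ ht) hac
      · exact absurd (key _ _ ht) hab
    intro i
    fin_cases i
    · exact this.1
    · exact this.2.1
    · exact this.2.2
  have hf := finrank_span_eq_card hli
  unfold Coll3 affPt at hcol
  rw [Projectivization.submodule_mk, Projectivization.submodule_mk,
    Projectivization.submodule_mk] at hcol
  rw [← Submodule.span_union, ← Submodule.span_union] at hcol
  have hr : Set.range ![(Fin.cons 1 a : Fin (n + 1) → F), Fin.cons 1 b, Fin.cons 1 c] =
      {Fin.cons 1 a} ∪ {Fin.cons 1 b} ∪ {Fin.cons 1 c} := by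
    ext x
    simp [Fin.exists_fin_succ, eq_comm, or_assoc]
  rw [hr, Fintype.card_fin] at hf
  omega

theorem stmt17 (F : Type*) [Field F] [Fintype F] (hcard : Fintype.card F = 2)
    (n : ℕ) (hn : 3 ≤ n) :
    (∀ K : Set (PGPoint F n), IsCap K → K.ncard ≤ 2 ^ n) ∧
    (∃ K : Set (PGPoint F n), IsCap K ∧ K.ncard = 2 ^ n) := by
  refine ⟨fun K hK => cap_upper hcard n K hK, Set.range (affPt F n), affPt_cap hcard n, ?_⟩
  rw [← Set.image_univ, Set.ncard_image_of_injective _ (affPt_inj F n), Set.ncard_univ,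
    Nat.card_eq_fintype_card, Fintype.card_fun, hcard, Fintype.card_fin]
end
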